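/- Let n ≥ 7 and let ρ : Fin (n−1) → Equiv.Perm (Fin n) be an sggi of rank n−1 and degree n which is independent. Then the generated subgroup G is all of Equiv.Perm (Fin n) and the generators form the Coxeter generators of the (n−1)-simplex: there exists a bijection c : Fin n ≃ Fin n such that for every i : Fin (n−1), ρ i = Equiv.swap (c i.castSucc) (c i.succ). -/

import Mathlib

/-- A string group generated by involutions (sggi): each generator has order 2 and
nonconsecutive generators commute. -/
def IsSggi {n r : ℕ} (ρ : Fin r → Equiv.Perm (Fin n)) : Prop :=
  (∀ i, orderOf (ρ i) = 2) ∧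
  ∀ i j : Fin r, 1 < |((i : ℕ) : ℤ) - ((j : ℕ) : ℤ)| → (ρ i * ρ j) ^ 2 = 1

/-- The generating family is independent: no generator lies in the subgroup generated
by the others. -/
def IsIndependent {n r : ℕ} (ρ : Fin r → Equiv.Perm (Fin n)) : Prop :=
  ∀ i, ρ i ∉ Subgroup.closure (ρ '' {j | j ≠ i})

/-!
Two facts about permutation groups with independent generators drive the argument. First, if
labels at distance at least two commute, the number of generators plus the number of orbits is at
most the degree. Second, when the rank is one less than the degree, the group is transitive by the
first fact, and for degree at least `7` deleting an inner generator destroys transitivity, so an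
orbit of what remains is invariant under every generator but the deleted one. The indicators of
such orbits over `ZMod 2` allow one to mark one edge `{x, ρ i x}` for each generator so that the
coboundaries of the marked edges are linearly independent; counting dimensions, the marked edges
form a tree, and `ρ i` moves a point off its own marked edge only on the edges of the two extreme
generators. Commutation relations rule out most of these extra moves. In the one surviving
configuration `ρ 2` is a transposition times `ρ 0`; then the cube of `ρ 2 * ρ 3` is `ρ 0`, possibly
times the last generator, which contradicts independence. So every generator is a transposition,
nonconsecutive ones are disjoint, and the tree is a path.
-/

open Equiv (Perm)

/-! ### Strings of independent involutions -/

/-- A family of involutions, labelled by a finite set of naturals, in which labels at distance at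
least two commute and no member lies in the subgroup generated by the others. -/
structure IsString {G : Type*} [Group G] (S : Finset ℕ) (f : ℕ → G) : Prop where
  mul_self : ∀ i ∈ S, f i * f i = 1
  commute : ∀ i ∈ S, ∀ j ∈ S, i + 1 < j → Commute (f i) (f j)
  notMem : ∀ i ∈ S, f i ∉ Subgroup.closure (f '' ↑(S.erase i))

namespace IsString

variable {G H : Type*} [Group G] [Group H] {S T : Finset ℕ} {f g : ℕ → G}

theorem mono (h : IsString S f) (hT : T ⊆ S) : IsString T f where
  mul_self i hi := h.mul_self i (hT hi)
  commute i hi j hj := h.commute i (hT hi) j (hT hj)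
  notMem i hi hmem := h.notMem i (hT hi) <|
    Subgroup.closure_mono (Set.image_mono (by exact_mod_cast Finset.erase_subset_erase i hT)) hmem

theorem congr (h : IsString S f) (hgf : ∀ i ∈ S, g i = f i) : IsString S g where
  mul_self i hi := by rw [hgf i hi, h.mul_self i hi]
  commute i hi j hj hij := by rw [hgf i hi, hgf j hj]; exact h.commute i hi j hj hij
  notMem i hi := by
    rw [hgf i hi, Set.image_congr (g := f) fun j hj => hgf j (Finset.mem_of_mem_erase hj)]
    exact h.notMem i hi

theorem notMem_closure (h : IsString S f) {i : ℕ} (hi : i ∈ S) {A : Set ℕ}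
    (hA : ∀ j ∈ A, j ∈ S ∧ j ≠ i) : f i ∉ Subgroup.closure (f '' A) := fun hmem =>
  h.notMem i hi <| Subgroup.closure_mono (Set.image_mono fun j hj => by
    simpa [and_comm] using hA j hj) hmem

theorem ne_one (h : IsString S f) {i : ℕ} (hi : i ∈ S) : f i ≠ 1 :=
  fun h1 => h.notMem i hi (h1 ▸ one_mem _)

theorem ne (h : IsString S f) {i j : ℕ} (hi : i ∈ S) (hj : j ∈ S) (hij : i ≠ j) : f i ≠ f j :=
  fun he => h.notMem_closure hi (A := {j}) (by rintro _ rfl; exact ⟨hj, hij.symm⟩)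
    (he ▸ Subgroup.subset_closure (by simp))

theorem map (h : IsString S f) (φ : G →* H) (hφ : Function.Injective φ) :
    IsString S (fun i => φ (f i)) where
  mul_self i hi := by rw [← map_mul, h.mul_self i hi, map_one]
  commute i hi j hj hij := (h.commute i hi j hj hij).map φ
  notMem i hi hmem := h.notMem i hi <| by
    rwa [← Set.image_image, ← MonoidHom.map_closure, Subgroup.mem_map_iff_mem hφ] at hmem

theorem of_map (φ : G →* H) (hφ : Function.Injective φ)
    (h : IsString S (fun i => φ (f i))) : IsString S f where
  mul_self i hi := hφ (by simpa using h.mul_self i hi)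
  commute i hi j hj hij := hφ (by simpa using (h.commute i hi j hj hij).eq)
  notMem i hi hmem := h.notMem i hi <| by
    have := Subgroup.mem_map_of_mem φ hmem
    rwa [MonoidHom.map_closure, Set.image_image] at this

theorem exists_lift (h : IsString S f) (A : Subgroup G) (hA : ∀ i ∈ S, f i ∈ A) :
    ∃ F : ℕ → A, (∀ i ∈ S, (F i : G) = f i) ∧ IsString S F := by
  classical
  refine ⟨fun i => if hi : i ∈ S then ⟨f i, hA i hi⟩ else 1, fun i hi => by simp [hi], ?_⟩
  exact of_map A.subtype A.subtype_injective (h.congr fun i hi => by simp [hi])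

theorem exists_image (h : IsString S f) (φ : G →* H) :
    ∃ J ⊆ S, IsString J (fun i => φ (f i)) ∧
      Subgroup.closure ((fun i => φ (f i)) '' (J : Set ℕ)) =
        Subgroup.closure ((fun i => φ (f i)) '' (S : Set ℕ)) := by
  classical
  set Γ : Finset ℕ → Subgroup H := fun J => Subgroup.closure ((fun i => φ (f i)) '' (J : Set ℕ))
  obtain ⟨J, ⟨hJS, hJ⟩, hmin⟩ : ∃ J, Minimal (fun J => J ⊆ S ∧ Γ J = Γ S) J :=
    exists_minimal_of_wellFoundedLT _ ⟨S, subset_rfl, rfl⟩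
  refine ⟨J, hJS, ⟨fun i hi => ?_, fun i hi j hj hij => ?_, fun i hi hmem => ?_⟩, hJ⟩
  · rw [← map_mul, h.mul_self i (hJS hi), map_one]
  · exact (h.commute i (hJS hi) j (hJS hj) hij).map φ
  have herase : Γ (J.erase i) = Γ J := by
    refine le_antisymm (Subgroup.closure_mono (Set.image_mono ?_)) ?_
    · exact_mod_cast Finset.erase_subset i J
    · rw [Subgroup.closure_le]
      rintro _ ⟨j, hj, rfl⟩
      by_cases hji : j = i
      · exact hji ▸ hmem
      · exact Subgroup.subset_closure ⟨j, by simpa [hji] using hj, rfl⟩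
  exact Finset.notMem_erase i J <|
    hmin ⟨(Finset.erase_subset i J).trans hJS, herase.trans hJ⟩ (Finset.erase_subset i J) hi

end IsString

section Orbits

variable {α : Type*}

/-- The number of orbits of a permutation group. -/
noncomputable def orbitCount (H : Subgroup (Perm α)) : ℕ :=
  Nat.card (MulAction.orbitRel.Quotient H α)

theorem orbitRel_mono {H K : Subgroup (Perm α)} (h : H ≤ K) :
    MulAction.orbitRel H α ≤ MulAction.orbitRel K α := by
  rintro x y ⟨g, hg⟩
  exact ⟨⟨g, h g.2⟩, hg⟩

variable [Finite α]

theorem card_quotient_anti {r s : Setoid α} (h : r ≤ s) :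
    Nat.card (Quotient s) ≤ Nat.card (Quotient r) :=
  Nat.card_le_card_of_surjective (Quotient.map' id h) (by rintro ⟨x⟩; exact ⟨⟦x⟧, rfl⟩)

theorem setoid_eq_of_le_of_card_le {r s : Setoid α} (h : r ≤ s)
    (hc : Nat.card (Quotient r) ≤ Nat.card (Quotient s)) : r = s := by
  refine le_antisymm h fun x y hxy => ?_
  have hs : Function.Surjective (Quotient.map' (s₁ := r) (s₂ := s) id h) := by
    rintro ⟨x⟩; exact ⟨⟦x⟧, rfl⟩
  have hmk : (⟦x⟧ : Quotient s) = ⟦y⟧ := Quotient.sound hxy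
  exact Quotient.exact ((hs.bijective_of_nat_card_le hc).1 hmk)

theorem orbitCount_anti {H K : Subgroup (Perm α)} (h : H ≤ K) : orbitCount K ≤ orbitCount H :=
  card_quotient_anti (orbitRel_mono h)

theorem orbitCount_pos [Nonempty α] (H : Subgroup (Perm α)) : 0 < orbitCount H := by
  have : Nonempty (MulAction.orbitRel.Quotient H α) := ⟨⟦Classical.arbitrary α⟧⟩
  exact Nat.card_pos

theorem isPretransitive_of_orbitCount_le_one {H : Subgroup (Perm α)} (h : orbitCount H ≤ 1) :
    MulAction.IsPretransitive H α := by
  rw [MulAction.pretransitive_iff_subsingleton_quotient]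
  exact Finite.card_le_one_iff_subsingleton.mp h

end Orbits

/-! ### Separated vectors in permutation modules -/

theorem zmod_two_eq_one {a : ZMod 2} (h : a ≠ 0) : a = 1 := Fin.eq_one_of_ne_zero a h

section Separated

variable {ι K V : Type*} [Field K] [AddCommGroup V] [Module K V]

/-- Vectors separated by subspaces: each `v i` avoids `U i`, which contains all the others. -/
structure Separated (v : ι → V) (U : ι → Submodule K V) : Prop where
  notMem : ∀ i, v i ∉ U i
  mem : ∀ ⦃i j⦄, i ≠ j → v i ∈ U j

namespace Separated

variable {v : ι → V} {U : ι → Submodule K V}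

theorem linearIndependent (h : Separated v U) : LinearIndependent K v := by
  rw [linearIndependent_iff_notMem_span]
  intro j hj
  refine h.notMem j (Submodule.span_le.mpr ?_ hj)
  rintro _ ⟨l, hl, rfl⟩
  exact h.mem hl.2

theorem mem_span_singleton [Finite ι] (h : Separated v U) {x : V}
    (hx : x ∈ Submodule.span K (Set.range v)) {j : ι} (hxU : ∀ l, l ≠ j → x ∈ U l) :
    x ∈ Submodule.span K {v j} := by
  classical
  cases nonempty_fintype ι
  obtain ⟨c, rfl⟩ := Submodule.mem_span_range_iff_exists_fun K |>.mp hx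
  have hc : ∀ l, l ≠ j → c l = 0 := by
    intro l hlj
    by_contra hcl
    have hl := hxU l hlj
    rw [← Finset.add_sum_erase _ _ (Finset.mem_univ l)] at hl
    have hrest : ∑ i ∈ Finset.univ.erase l, c i • v i ∈ U l := Submodule.sum_mem _ fun i hi =>
      Submodule.smul_mem _ _ (h.mem (Finset.ne_of_mem_erase hi))
    exact h.notMem l (((U l).smul_mem_iff hcl).mp (((U l).add_mem_iff_left hrest).mp hl))
  rw [Finset.sum_eq_single_of_mem j (Finset.mem_univ j) fun l _ hl => by rw [hc l hl, zero_smul]]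
  exact Submodule.smul_mem _ _ (Submodule.mem_span_singleton_self _)

theorem card_le_finrank [Fintype ι] [FiniteDimensional K V] (h : Separated v U) {j : ι} {x : V}
    (hxU : x ∈ U j) (hx : x ∉ Submodule.span K (Set.range v)) :
    Fintype.card ι ≤ Module.finrank K (U j) := by
  classical
  have hli := h.linearIndependent.comp ((↑) : {i // i ≠ j} → ι) Subtype.val_injective
  have hcard : Fintype.card {i // i ≠ j} + 1 = Fintype.card ι := by
    have := Fintype.card_pos_iff.mpr ⟨j⟩
    rw [Fintype.card_subtype_compl, Fintype.card_subtype_eq]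
    omega
  have hlt : Submodule.span K (Set.range (v ∘ ((↑) : {i // i ≠ j} → ι))) < U j := by
    refine SetLike.lt_iff_le_and_exists.mpr ⟨Submodule.span_le.mpr ?_, x, hxU, fun hx' => hx ?_⟩
    · rintro _ ⟨i, rfl⟩
      exact h.mem i.2
    · exact Submodule.span_mono (Set.range_comp_subset_range _ _) hx'
  have := Submodule.finrank_lt_finrank_of_lt hlt
  rw [finrank_span_eq_card hli] at this
  omega

end Separated

theorem Separated.map_eq_self [Finite ι] [Module (ZMod 2) V] {v : ι → V}
    {U : ι → Submodule (ZMod 2) V} (h : Separated v U) (g : V →ₗ[ZMod 2] V)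
    (hg : Function.Injective g) (hU : ∀ i, ∀ x ∈ U i, g x ∈ U i) {j : ι}
    (hj : g (v j) ∈ Submodule.span (ZMod 2) (Set.range v)) : g (v j) = v j := by
  obtain ⟨c, hc⟩ := Submodule.mem_span_singleton.mp <|
    h.mem_span_singleton hj fun l hl => hU l _ (h.mem hl.symm)
  have hc0 : c ≠ 0 := by
    rintro rfl
    rw [zero_smul, eq_comm, map_eq_zero_iff g hg] at hc
    exact h.notMem j (hc ▸ zero_mem _)
  rw [← hc, zmod_two_eq_one hc0, one_smul]

theorem add_mem_of_finrank_le [Module (ZMod 2) V] [FiniteDimensional (ZMod 2) V]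
    (W : Submodule (ZMod 2) V) (hW : Module.finrank (ZMod 2) V ≤ Module.finrank (ZMod 2) W + 1)
    {x y : V} (hx : x ∉ W) (hy : y ∉ W) : x + y ∈ W := by
  have hlt : W < W ⊔ Submodule.span (ZMod 2) {x} := by
    refine SetLike.lt_iff_le_and_exists.mpr ⟨le_sup_left, x, ?_, hx⟩
    exact le_sup_right (a := W) (Submodule.mem_span_singleton_self x)
  have htop : W ⊔ Submodule.span (ZMod 2) {x} = ⊤ := by
    refine Submodule.eq_top_of_finrank_eq (le_antisymm (Submodule.finrank_le _) ?_)
    exact hW.trans (Submodule.finrank_lt_finrank_of_lt hlt)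
  obtain ⟨w, hw, c, rfl⟩ : ∃ w ∈ W, ∃ c : ZMod 2, w + c • x = y := by
    have hy' : y ∈ W ⊔ Submodule.span (ZMod 2) {x} := htop ▸ Submodule.mem_top
    simpa [Submodule.mem_sup, Submodule.mem_span_singleton] using hy'
  have hc : c ≠ 0 := by rintro rfl; simp [hw] at hy
  rwa [zmod_two_eq_one hc, one_smul, add_left_comm, ZModModule.add_self, add_zero]

end Separated

section PermutationModule

variable {β : Type*}

theorem mem_of_forall_single_mem [Finite β] [DecidableEq β]
    {W : Submodule (ZMod 2) (β → ZMod 2)} {φ : β → ZMod 2}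
    (h : ∀ b, φ b ≠ 0 → Pi.single b 1 ∈ W) : φ ∈ W := by
  cases nonempty_fintype β
  rw [pi_eq_sum_univ' φ]
  refine Submodule.sum_mem _ fun b _ => ?_
  by_cases hb : φ b = 0
  · rw [hb, zero_smul]; exact zero_mem _
  · convert W.smul_mem _ (h b hb) using 2

theorem single_notMem_of_invariant [Finite β] [DecidableEq β]
    {T : Subgroup (Perm β)} [MulAction.IsPretransitive T β]
    {U : Submodule (ZMod 2) (β → ZMod 2)} (hU : U ≠ ⊤)
    (hT : ∀ k ∈ T, ∀ φ ∈ U, φ ∘ k ∈ U) (a : β) : Pi.single a 1 ∉ U := by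
  refine fun ha => hU (Submodule.eq_top_iff'.mpr fun φ => mem_of_forall_single_mem fun b _ => ?_)
  obtain ⟨k, rfl⟩ := MulAction.exists_smul_eq T b a
  have := hT k k.2 _ ha
  rw [Pi.single_comp_equiv] at this
  simpa [Subgroup.smul_def] using this

variable [Fintype β]

/-- The augmentation submodule of the permutation module: the functions with sum zero. -/
def augmentation (β : Type*) [Fintype β] : Submodule (ZMod 2) (β → ZMod 2) :=
  LinearMap.ker (∑ b, LinearMap.proj b)

theorem mem_augmentation {φ : β → ZMod 2} : φ ∈ augmentation β ↔ ∑ b, φ b = 0 := by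
  simp [augmentation]

theorem isCoatom_augmentation [Nonempty β] : IsCoatom (augmentation β) := by
  classical
  refine LinearMap.isCoatom_ker_of_surjective fun c => ?_
  exact ⟨Pi.single (Classical.arbitrary β) c, by simp⟩

theorem augmentation_le [DecidableEq β] {W : Submodule (ZMod 2) (β → ZMod 2)}
    (h : ∀ a b, Pi.single a 1 + Pi.single b 1 ∈ W) : augmentation β ≤ W := by
  intro φ hφ
  rw [mem_augmentation] at hφ
  by_contra hφW
  obtain ⟨a, -⟩ : ∃ a, φ a ≠ 0 := Function.ne_iff.mp (by rintro rfl; exact hφW (zero_mem W))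
  refine hφW ?_
  have hsum : φ = ∑ b, φ b • (Pi.single b 1 + Pi.single a 1 : β → ZMod 2) := by
    simp only [smul_add, Finset.sum_add_distrib, ← Finset.sum_smul, hφ, zero_smul, add_zero]
    ext c
    simp [Finset.sum_apply, Pi.single_apply]
  rw [hsum]
  exact Submodule.sum_mem _ fun b _ => W.smul_mem _ (h b a)

variable {T : Subgroup (Perm β)} [MulAction.IsPretransitive T β]

theorem eq_augmentation_of_invariant {U : Submodule (ZMod 2) (β → ZMod 2)} (hU : U ≠ ⊤)
    (hT : ∀ k ∈ T, ∀ φ ∈ U, φ ∘ k ∈ U)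
    (hdim : Fintype.card β ≤ Module.finrank (ZMod 2) U + 1) : U = augmentation β := by
  classical
  have hne : Nonempty β := by
    by_contra hβ
    rw [not_nonempty_iff] at hβ
    exact hU (Subsingleton.elim _ _)
  refine ((isCoatom_augmentation.le_iff).mp (augmentation_le fun a b => ?_)).resolve_left hU
  refine add_mem_of_finrank_le U ?_ (single_notMem_of_invariant hU hT a)
    (single_notMem_of_invariant hU hT b)
  rwa [Module.finrank_fintype_fun_eq_card]

theorem exists_comp_ne_of_isPretransitive (hβ : 3 ≤ Fintype.card β) :
    ∃ k ∈ T, ∃ φ ∈ augmentation β, φ ∘ k ≠ φ := by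
  classical
  obtain ⟨a, b, c, hab, hac, hbc⟩ := Fintype.two_lt_card_iff.mp hβ
  obtain ⟨k, hk⟩ := MulAction.exists_smul_eq T c a
  replace hk : (k : Perm β) c = a := hk
  refine ⟨k, k.2, Pi.single a 1 + Pi.single b 1, ?_, fun h => ?_⟩
  · simp [mem_augmentation, Finset.sum_add_distrib, ZModModule.add_self]
  have := congrFun h c
  simp [hk, hab, hac.symm, hbc.symm] at this

namespace Separated

variable {ι : Type*} [Fintype ι] {v : ι → β → ZMod 2} {U : ι → Submodule (ZMod 2) (β → ZMod 2)}

theorem exists_comp_notMem_span (h : Separated v U)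
    (hT : ∀ k ∈ T, ∀ i, ∀ φ ∈ U i, φ ∘ k ∈ U i) (hβ : 3 ≤ Fintype.card β)
    (hι : Fintype.card β ≤ Fintype.card ι + 1) :
    ∃ k ∈ T, ∃ j, v j ∘ k ∉ Submodule.span (ZMod 2) (Set.range v) := by
  set W := Submodule.span (ZMod 2) (Set.range v) with hW
  by_contra! hinv
  have hfix : ∀ k ∈ T, ∀ φ ∈ W, φ ∘ k = φ := by
    intro k hk φ hφ
    refine (Submodule.span_le (p := LinearMap.eqLocus
      (LinearMap.funLeft (ZMod 2) (ZMod 2) k) LinearMap.id)).mpr ?_ hφ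
    rintro _ ⟨j, rfl⟩
    exact h.map_eq_self (LinearMap.funLeft (ZMod 2) (ZMod 2) k)
      (LinearMap.funLeft_injective_of_surjective _ _ _ k.surjective) (hT k hk) (hinv k hk j)
  obtain ⟨k, hk, φ, hφ, hne⟩ := exists_comp_ne_of_isPretransitive (T := T) hβ
  refine hne (hfix k hk φ ?_)
  by_cases hWtop : W = ⊤
  · exact hWtop ▸ Submodule.mem_top
  · rw [eq_augmentation_of_invariant (T := T) hWtop
      (fun k hk φ hφ => (hfix k hk φ hφ).symm ▸ hφ) ?_]
    · exact hφ
    · rwa [hW, finrank_span_eq_card h.linearIndependent]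

theorem card_add_two_le_of_isPretransitive (h : Separated v U)
    (hT : ∀ k ∈ T, ∀ i, ∀ φ ∈ U i, φ ∘ k ∈ U i) (hβ : 4 ≤ Fintype.card β) :
    Fintype.card ι + 2 ≤ Fintype.card β := by
  classical
  by_contra hι
  obtain ⟨k, hk, j, hj⟩ := h.exists_comp_notMem_span hT (by omega) (by omega)
  have hU : ∀ l, l ≠ j → U l = augmentation β := fun l hl => by
    refine eq_augmentation_of_invariant (T := T) (fun htop => h.notMem l ?_)
      (fun k hk => hT k hk l) ?_
    · exact htop ▸ Submodule.mem_top
    · have := h.card_le_finrank (hT k hk l _ (h.mem hl.symm)) hj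
      omega
  have hrest : 1 < (Finset.univ.erase j).card := by
    rw [Finset.card_erase_of_mem (Finset.mem_univ j), Finset.card_univ]
    omega
  obtain ⟨l, hl, l', hl', hll'⟩ := Finset.one_lt_card.mp hrest
  refine h.notMem l ?_
  rw [hU l (Finset.ne_of_mem_erase hl), ← hU l' (Finset.ne_of_mem_erase hl')]
  exact h.mem hll'

end Separated

end PermutationModule

/-! ### The action of a centralizer on cycles -/

section Support

variable {β ι : Type*} [Finite β] [Fintype ι] {M : Set β} {v : ι → β → ZMod 2}
  {U : ι → Submodule (ZMod 2) (β → ZMod 2)}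

theorem mem_span_single_of_support [DecidableEq β] {φ : β → ZMod 2} (h : ∀ b, φ b ≠ 0 → b ∈ M) :
    φ ∈ Submodule.span (ZMod 2) (Set.range fun b : M => Pi.single (b : β) 1) :=
  mem_of_forall_single_mem fun b hb => Submodule.subset_span ⟨⟨b, h b hb⟩, rfl⟩

theorem finrank_span_single_le [DecidableEq β] :
    Module.finrank (ZMod 2)
      (Submodule.span (ZMod 2) (Set.range fun b : M => (Pi.single b 1 : β → ZMod 2))) ≤
      M.ncard := by
  have := Fintype.ofFinite M
  rw [← Nat.card_coe_set_eq, Nat.card_eq_fintype_card]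
  exact finrank_range_le_card _

namespace Separated

theorem card_le_ncard_support (h : Separated v U) (hv : ∀ i b, v i b ≠ 0 → b ∈ M) :
    Fintype.card ι ≤ M.ncard := by
  classical
  rw [← finrank_span_eq_card h.linearIndependent]
  refine (Submodule.finrank_mono (Submodule.span_le.mpr ?_)).trans finrank_span_single_le
  rintro _ ⟨i, rfl⟩
  exact mem_span_single_of_support (hv i)

theorem apply_eq_self_of_ncard_support_le (h : Separated v U) (hv : ∀ i b, v i b ≠ 0 → b ∈ M)
    (hM : M.ncard ≤ Fintype.card ι) {k : Perm β} (hkM : ∀ b, k b ∈ M → b ∈ M)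
    (hk : ∀ i, ∀ φ ∈ U i, φ ∘ k ∈ U i) {b : β} (hb : b ∈ M) : k b = b := by
  classical
  have hspan : Submodule.span (ZMod 2) (Set.range v) =
      Submodule.span (ZMod 2) (Set.range fun b : M => Pi.single (b : β) 1) := by
    refine Submodule.eq_of_le_of_finrank_le (Submodule.span_le.mpr ?_) ?_
    · rintro _ ⟨i, rfl⟩
      exact mem_span_single_of_support (hv i)
    · rw [finrank_span_eq_card h.linearIndependent]
      exact finrank_span_single_le.trans hM
  have hfix : Submodule.span (ZMod 2) (Set.range v) ≤
      LinearMap.eqLocus (LinearMap.funLeft (ZMod 2) (ZMod 2) k) LinearMap.id := by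
    rw [Submodule.span_le]
    rintro _ ⟨i, rfl⟩
    refine h.map_eq_self _ (LinearMap.funLeft_injective_of_surjective _ _ _ k.surjective) hk ?_
    rw [hspan]
    exact mem_span_single_of_support fun b hb => hkM b (hv i _ hb)
  have hsingle : Pi.single b (1 : ZMod 2) ∘ k = Pi.single b 1 :=
    hfix <| hspan.ge <| Submodule.subset_span ⟨⟨b, hb⟩, rfl⟩
  by_contra hkb
  simpa [hkb] using congrFun hsingle b

end Separated

end Support

section Cycles

variable {α : Type*}

/-- The cycles of a permutation, fixed points included. -/
abbrev Cycles (ζ : Perm α) : Type _ := Quotient (Equiv.Perm.SameCycle.setoid ζ)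

/-- The cycle of a permutation through a point. -/
abbrev toCycle (ζ : Perm α) (x : α) : Cycles ζ := Quotient.mk _ x

variable {ζ : Perm α}

theorem toCycle_eq_iff {x y : α} : toCycle ζ x = toCycle ζ y ↔ ζ.SameCycle x y :=
  Quotient.eq (r := Equiv.Perm.SameCycle.setoid ζ)

theorem toCycle_apply (x : α) : toCycle ζ (ζ x) = toCycle ζ x :=
  toCycle_eq_iff.mpr (Equiv.Perm.sameCycle_apply_left.mpr .rfl)

theorem toCycle_symm_apply (x : α) : toCycle ζ (ζ.symm x) = toCycle ζ x :=
  toCycle_eq_iff.mpr (Equiv.Perm.sameCycle_symm_apply_left.mpr .rfl)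

theorem sameCycle_iff_of_mul_self (hζ : ζ * ζ = 1) {x y : α} :
    ζ.SameCycle x y ↔ x = y ∨ ζ x = y := by
  refine ⟨?_, ?_⟩
  · rintro ⟨i, rfl⟩
    obtain ⟨m, rfl⟩ | ⟨m, rfl⟩ := i.even_or_odd
    · left; rw [← two_mul, zpow_mul, zpow_ofNat, sq, hζ, one_zpow, Equiv.Perm.one_apply]
    · right; rw [zpow_add_one, zpow_mul, zpow_ofNat, sq, hζ, one_zpow, one_mul]
  · rintro (rfl | rfl)
    · exact .rfl
    · exact ⟨1, by rw [zpow_one]⟩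

variable (ζ) in
/-- The set of nontrivial cycles of a permutation. -/
def movedCycles : Set (Cycles ζ) := toCycle ζ '' {x | ζ x ≠ x}

theorem toCycle_mem_movedCycles {x : α} : toCycle ζ x ∈ movedCycles ζ ↔ ζ x ≠ x := by
  refine ⟨?_, fun hx => ⟨x, hx, rfl⟩⟩
  rintro ⟨y, hy, hyx⟩
  exact fun hx => hy ((toCycle_eq_iff.mp hyx).apply_eq_self_iff.mpr hx)

theorem card_cycles_add_ncard_movedCycles_le [Finite α] :
    Nat.card (Cycles ζ) + (movedCycles ζ).ncard ≤ Nat.card α := by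
  rw [← Nat.card_coe_set_eq, ← Nat.card_sum]
  refine Nat.card_le_card_of_injective (Sum.elim (fun b => b.out) fun b => ζ b.1.out)
    (Quotient.out_injective.sumElim (fun b c h => ?_) fun b c h => ?_)
  · exact Subtype.ext (Quotient.out_injective (ζ.injective h))
  · have hbc : b = c.1 := by
      rw [← b.out_eq, h, ← toCycle, toCycle_apply]
      exact c.1.out_eq
    have hc := c.2
    rw [← c.1.out_eq, toCycle_mem_movedCycles, ← h, hbc] at hc
    exact hc rfl

theorem apply_apply_comm (g : Subgroup.centralizer {ζ}) (x : α) : g.1 (ζ x) = ζ (g.1 x) :=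
  congrArg (fun h : Perm α => h x) (Subgroup.mem_centralizer_singleton_iff.mp g.2)

/-- The action of the centralizer of a permutation on its cycles. -/
def cyclePerm (ζ : Perm α) : Subgroup.centralizer {ζ} →* Perm (Cycles ζ) where
  toFun g := Quotient.congr g.1 fun x y => by
    have hg : g.1 * ζ * g.1⁻¹ = ζ :=
      mul_inv_eq_of_eq_mul (Subgroup.mem_centralizer_singleton_iff.mp g.2)
    change ζ.SameCycle x y ↔ ζ.SameCycle (g.1 x) (g.1 y)
    have hconj := Equiv.Perm.sameCycle_conj (f := ζ) (g := g.1) (x := g.1 x) (y := g.1 y)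
    simpa [hg] using hconj.symm
  map_one' := by ext ⟨x⟩; rfl
  map_mul' g h := by ext ⟨x⟩; rfl

theorem cyclePerm_toCycle (g : Subgroup.centralizer {ζ}) (x : α) :
    cyclePerm ζ g (toCycle ζ x) = toCycle ζ (g.1 x) := rfl

theorem cyclePerm_mem_movedCycles (g : Subgroup.centralizer {ζ}) {b : Cycles ζ} :
    cyclePerm ζ g b ∈ movedCycles ζ ↔ b ∈ movedCycles ζ := by
  induction b using Quotient.inductionOn with
  | h x => rw [cyclePerm_toCycle, toCycle_mem_movedCycles, toCycle_mem_movedCycles,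
      ← apply_apply_comm, g.1.injective.ne_iff]

theorem orbitCount_le_orbitCount_map_cyclePerm [Finite α]
    {H : Subgroup (Subgroup.centralizer {ζ})} (hζ : ζ ∈ H.map (Subgroup.subtype _)) :
    orbitCount (H.map (Subgroup.subtype _)) ≤ orbitCount (H.map (cyclePerm ζ)) := by
  refine Nat.card_le_card_of_injective (fun o => ⟦toCycle ζ o.out⟧) fun o o' ho => ?_
  rw [← o.out_eq, ← o'.out_eq]
  obtain ⟨⟨_, k, hk, rfl⟩, hko⟩ := Quotient.exact ho
  obtain ⟨i, hi⟩ := toCycle_eq_iff.mp hko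
  refine Quotient.sound ⟨⟨ζ ^ i * k, mul_mem (zpow_mem hζ i) ⟨k, hk, rfl⟩⟩, hi⟩

open scoped Classical in
/-- The permutation agreeing with `ζ` on the cycles where the function is nonzero and fixing
all other points, as an element of the centralizer of `ζ`. -/
noncomputable def restrictCycles (ζ : Perm α) (φ : Cycles ζ → ZMod 2) :
    Subgroup.centralizer {ζ} :=
  ⟨{toFun x := if φ (toCycle ζ x) = 0 then x else ζ x
    invFun x := if φ (toCycle ζ x) = 0 then x else ζ.symm x
    left_inv x := by by_cases h : φ (toCycle ζ x) = 0 <;> simp [h, toCycle_apply]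
    right_inv x := by by_cases h : φ (toCycle ζ x) = 0 <;> simp [h, toCycle_symm_apply]}, by
    rw [Subgroup.mem_centralizer_singleton_iff]
    ext x
    by_cases h : φ (toCycle ζ x) = 0 <;> simp [h, toCycle_apply]⟩

theorem restrictCycles_apply (φ : Cycles ζ → ZMod 2) (x : α) :
    (restrictCycles ζ φ).1 x = if φ (toCycle ζ x) = 0 then x else ζ x := rfl

theorem restrictCycles_comp_cyclePerm (φ : Cycles ζ → ZMod 2) (g : Subgroup.centralizer {ζ}) :
    restrictCycles ζ (φ ∘ cyclePerm ζ g) = g⁻¹ * restrictCycles ζ φ * g := by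
  rw [mul_assoc, eq_inv_mul_iff_mul_eq]
  ext x
  change g.1 ((restrictCycles ζ (φ ∘ cyclePerm ζ g)).1 x) = (restrictCycles ζ φ).1 (g.1 x)
  rw [restrictCycles_apply, restrictCycles_apply, Function.comp_apply, cyclePerm_toCycle,
    apply_ite g.1, apply_apply_comm]

theorem restrictCycles_zero : restrictCycles ζ 0 = 1 := by
  ext x; simp [restrictCycles_apply]

theorem restrictCycles_add (hζ : ζ * ζ = 1) (φ ψ : Cycles ζ → ZMod 2) :
    restrictCycles ζ (φ + ψ) = restrictCycles ζ φ * restrictCycles ζ ψ := by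
  ext x
  have hx : ζ (ζ x) = x := by rw [← Equiv.Perm.mul_apply, hζ, Equiv.Perm.one_apply]
  rw [Subgroup.coe_mul, Equiv.Perm.mul_apply, restrictCycles_apply, restrictCycles_apply,
    restrictCycles_apply, Pi.add_apply]
  by_cases h : φ (toCycle ζ x) = 0 <;> by_cases h' : ψ (toCycle ζ x) = 0
  · simp [h, h']
  · simp [h, h', toCycle_apply]
  · simp [h, h']
  · simp [zmod_two_eq_one h, zmod_two_eq_one h', toCycle_apply, hx, CharTwo.add_self_eq_zero]

theorem exists_restrictCycles_eq (hζ : ζ * ζ = 1) {g : Subgroup.centralizer {ζ}}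
    (hg : cyclePerm ζ g = 1) :
    ∃ φ, restrictCycles ζ φ = g ∧ ∀ b, φ b ≠ 0 → b ∈ movedCycles ζ := by
  classical
  have hgx : ∀ x, g.1 x ≠ x → g.1 x = ζ x := by
    intro x hx
    have hb : toCycle ζ x = toCycle ζ (g.1 x) := by rw [← cyclePerm_toCycle, hg]; rfl
    rw [toCycle_eq_iff, sameCycle_iff_of_mul_self hζ] at hb
    exact (hb.resolve_left hx.symm).symm
  refine ⟨Quotient.lift (fun x => if g.1 x = x then 0 else 1) fun x y hxy => ?_, ?_, ?_⟩
  · obtain rfl | rfl := (sameCycle_iff_of_mul_self hζ).mp hxy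
    · rfl
    · simp only [apply_apply_comm, ζ.injective.eq_iff]
  · ext x
    rw [restrictCycles_apply]
    by_cases hx : g.1 x = x
    · simp [hx]
    · have hζx : ζ x ≠ x := hgx x hx ▸ hx
      simp [hgx x hx, hζx]
  · intro b
    induction b using Quotient.inductionOn with
    | h x =>
      intro hx
      have hx : g.1 x ≠ x := by simpa using hx
      exact toCycle_mem_movedCycles.mpr (hgx x hx ▸ hx)

/-- The functions on the cycles of an involution whose restriction of the involution lies in a
given subgroup of the centralizer. -/
noncomputable def restrictSubmodule (hζ : ζ * ζ = 1) (H : Subgroup (Subgroup.centralizer {ζ})) :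
    Submodule (ZMod 2) (Cycles ζ → ZMod 2) :=
  AddSubgroup.toZModSubmodule 2
    { carrier := {φ | restrictCycles ζ φ ∈ H}
      add_mem' {φ ψ} hφ hψ := by
        rw [Set.mem_ofPred_eq, restrictCycles_add hζ]; exact mul_mem hφ hψ
      zero_mem' := by rw [Set.mem_ofPred_eq, restrictCycles_zero]; exact one_mem H
      neg_mem' {φ} hφ := by rwa [ZModModule.neg_eq_self] }

theorem mem_restrictSubmodule {hζ : ζ * ζ = 1} {H : Subgroup (Subgroup.centralizer {ζ})}
    {φ : Cycles ζ → ZMod 2} : φ ∈ restrictSubmodule hζ H ↔ restrictCycles ζ φ ∈ H := Iff.rfl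

namespace IsString

variable {S J : Finset ℕ} {F : ℕ → Subgroup.centralizer {ζ}}

theorem closure_image_le_erase (hJS : J ⊆ S) {j : ℕ} (hj : j ∈ S \ J) :
    Subgroup.closure (F '' J) ≤ Subgroup.closure (F '' ↑(S.erase j)) := by
  refine Subgroup.closure_mono (Set.image_mono fun i hi => ?_)
  have hij : i ≠ j := by rintro rfl; exact (Finset.mem_sdiff.mp hj).2 hi
  simp [hij, hJS hi]

theorem exists_separated (hζ : ζ * ζ = 1) (h : IsString S F) (hJS : J ⊆ S)
    (hJ : Subgroup.closure ((fun i => cyclePerm ζ (F i)) '' J) =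
      Subgroup.closure ((fun i => cyclePerm ζ (F i)) '' S)) :
    ∃ v : ↥(S \ J) → Cycles ζ → ZMod 2,
      Separated v (fun j => restrictSubmodule hζ (Subgroup.closure (F '' ↑(S.erase j)))) ∧
        ∀ j b, v j b ≠ 0 → b ∈ movedCycles ζ := by
  have hv : ∀ j : ↥(S \ J), ∃ v, (∃ w ∈ Subgroup.closure (F '' J),
      restrictCycles ζ v = F j * w⁻¹) ∧ ∀ b, v b ≠ 0 → b ∈ movedCycles ζ := by
    intro j
    have hj : cyclePerm ζ (F j) ∈ (Subgroup.closure (F '' J)).map (cyclePerm ζ) := by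
      rw [MonoidHom.map_closure, Set.image_image, hJ]
      exact Subgroup.subset_closure ⟨j, (Finset.mem_sdiff.mp j.2).1, rfl⟩
    obtain ⟨w, hw, hwj⟩ := hj
    obtain ⟨v, hv, hvM⟩ := exists_restrictCycles_eq hζ (g := F j * w⁻¹) (by
      rw [map_mul, map_inv, hwj, mul_inv_cancel])
    exact ⟨v, ⟨w, hw, hv⟩, hvM⟩
  choose v hv hvM using hv
  refine ⟨v, ⟨fun j hj => ?_, fun j l hjl => ?_⟩, hvM⟩
  · obtain ⟨w, hw, hvw⟩ := hv j
    rw [mem_restrictSubmodule, hvw,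
      Subgroup.mul_mem_cancel_right _ (inv_mem (closure_image_le_erase hJS j.2 hw))] at hj
    exact h.notMem j (Finset.mem_sdiff.mp j.2).1 hj
  · obtain ⟨w, hw, hvw⟩ := hv j
    rw [mem_restrictSubmodule, hvw]
    refine mul_mem (Subgroup.subset_closure ⟨j, ?_, rfl⟩)
      (inv_mem (closure_image_le_erase hJS l.2 hw))
    simpa [Subtype.coe_ne_coe.mpr hjl] using (Finset.mem_sdiff.mp j.2).1

theorem comp_mem_restrictSubmodule {hζ : ζ * ζ = 1} (hJS : J ⊆ S) {j : ℕ} (hj : j ∈ S \ J)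
    {k : Perm (Cycles ζ)} (hk : k ∈ Subgroup.closure ((fun i => cyclePerm ζ (F i)) '' J))
    {φ : Cycles ζ → ZMod 2}
    (hφ : φ ∈ restrictSubmodule hζ (Subgroup.closure (F '' ↑(S.erase j)))) :
    φ ∘ k ∈ restrictSubmodule hζ (Subgroup.closure (F '' ↑(S.erase j))) := by
  rw [← Set.image_image, ← MonoidHom.map_closure] at hk
  obtain ⟨w, hw, rfl⟩ := hk
  have hw := closure_image_le_erase hJS hj hw
  rw [mem_restrictSubmodule, restrictCycles_comp_cyclePerm]
  exact mul_mem (mul_mem (inv_mem hw) hφ) hw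

end IsString

end Cycles

/-! ### The rank bound -/

section CentralMember

variable {α : Type*} {ζ : Perm α} {S J : Finset ℕ} {F : ℕ → Subgroup.centralizer {ζ}}

namespace IsString

theorem exists_centralizer_lift {f : ℕ → Perm α} {z : ℕ} (h : IsString S f)
    (hc : ∀ j ∈ S, Commute (f j) (f z)) :
    ∃ F : ℕ → Subgroup.centralizer {f z}, IsString S F ∧
      ∀ T ⊆ S, (Subgroup.closure (F '' T)).map (Subgroup.subtype _) =
        Subgroup.closure (f '' T) := by
  obtain ⟨F, hF, hstr⟩ := h.exists_lift (Subgroup.centralizer {f z})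
    fun j hj => Subgroup.mem_centralizer_singleton_iff.mpr (hc j hj)
  refine ⟨F, hstr, fun T hT => ?_⟩
  rw [MonoidHom.map_closure, Set.image_image]
  exact congrArg _ (Set.image_congr fun j hj => hF j (hT hj))

variable [Finite α]

theorem card_sdiff_le_ncard_movedCycles (hζ : ζ * ζ = 1) (h : IsString S F) (hJS : J ⊆ S)
    (hJ : Subgroup.closure ((fun i => cyclePerm ζ (F i)) '' J) =
      Subgroup.closure ((fun i => cyclePerm ζ (F i)) '' S)) :
    (S \ J).card ≤ (movedCycles ζ).ncard := by
  obtain ⟨v, hsep, hv⟩ := h.exists_separated hζ hJS hJ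
  simpa only [Fintype.card_coe] using hsep.card_le_ncard_support hv

theorem cyclePerm_apply_eq_self (hζ : ζ * ζ = 1) (h : IsString S F) (hJS : J ⊆ S)
    (hJ : Subgroup.closure ((fun i => cyclePerm ζ (F i)) '' J) =
      Subgroup.closure ((fun i => cyclePerm ζ (F i)) '' S))
    (hcard : (movedCycles ζ).ncard ≤ (S \ J).card) {g : Subgroup.centralizer {ζ}}
    (hg : g ∈ Subgroup.closure (F '' S)) {b : Cycles ζ} (hb : b ∈ movedCycles ζ) :
    cyclePerm ζ g b = b := by
  obtain ⟨v, hsep, hv⟩ := h.exists_separated hζ hJS hJ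
  have hgJ : cyclePerm ζ g ∈ Subgroup.closure ((fun i => cyclePerm ζ (F i)) '' J) := by
    rw [hJ, ← Set.image_image, ← MonoidHom.map_closure]
    exact Subgroup.mem_map_of_mem _ hg
  exact hsep.apply_eq_self_of_ncard_support_le hv (by simpa only [Fintype.card_coe] using hcard)
    (fun b => (cyclePerm_mem_movedCycles g).mp)
    (fun j φ hφ => comp_mem_restrictSubmodule hJS j.2 hgJ hφ) hb

theorem central_alternative (hζ : ζ * ζ = 1) (h : IsString S F)
    (hmem : ζ ∈ (Subgroup.closure (F '' S)).map (Subgroup.subtype _))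
    (hcycles : ∀ (J : Finset ℕ) (g : ℕ → Perm (Cycles ζ)), IsString J g →
      J.card + orbitCount (Subgroup.closure (g '' J)) ≤ Nat.card (Cycles ζ)) :
    S.card + orbitCount ((Subgroup.closure (F '' S)).map (Subgroup.subtype _)) + 1 ≤ Nat.card α ∨
      (S.card + orbitCount ((Subgroup.closure (F '' S)).map (Subgroup.subtype _)) ≤ Nat.card α ∧
        ∀ g ∈ Subgroup.closure (F '' S), ∀ b ∈ movedCycles ζ, cyclePerm ζ g b = b) := by
  obtain ⟨J, hJS, hstr, hJ⟩ := h.exists_image (cyclePerm ζ)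
  have hquot := hcycles J _ hstr
  have hker := h.card_sdiff_le_ncard_movedCycles hζ hJS hJ
  have horb := orbitCount_le_orbitCount_map_cyclePerm hmem
  rw [MonoidHom.map_closure (cyclePerm ζ), Set.image_image, ← hJ] at horb
  have hsum := Finset.card_sdiff_add_card_eq_card hJS
  have hcard := card_cycles_add_ncard_movedCycles_le (ζ := ζ)
  rcases hker.lt_or_eq with hlt | heq
  · exact .inl (by omega)
  · exact .inr ⟨by omega, fun g hg b hb => h.cyclePerm_apply_eq_self hζ hJS hJ heq.ge hg hb⟩

end IsString

theorem card_cycles_lt [Finite α] (h1 : ζ ≠ 1) : Nat.card (Cycles ζ) < Nat.card α := by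
  obtain ⟨x, hx⟩ : ∃ x, ζ x ≠ x := by
    contrapose! h1
    exact Equiv.ext h1
  have hpos := (Set.ncard_pos (Set.toFinite _)).mpr ⟨_, toCycle_mem_movedCycles.mpr hx⟩
  have := card_cycles_add_ncard_movedCycles_le (ζ := ζ)
  omega

end CentralMember

section RankBound

universe u

theorem apply_apply_of_mul_self {α : Type u} {ζ : Perm α} (hζ : ζ * ζ = 1) (x : α) :
    ζ (ζ x) = x :=
  congrArg (fun g : Perm α => g x) hζ

theorem commute_of_apply_eq_or_eq {α : Type u} {ζ g : Perm α} (hζ : ζ * ζ = 1) (hg : g * g = 1)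
    (h : ∀ x, ζ x ≠ x → x = g x ∨ ζ x = g x) : Commute g ζ := by
  have hζζ := apply_apply_of_mul_self hζ
  have hgg := apply_apply_of_mul_self hg
  have key : ∀ x, ζ x ≠ x → g (ζ x) = ζ (g x) := by
    intro x hx
    have h' := h _ (ζ.injective.ne hx)
    rw [hζζ] at h'
    rcases h x hx with h1 | h1 <;> rcases h' with h2 | h2
    · rw [← h1, ← h2]
    · exact absurd (g.injective (h2.symm.trans h1)) hx
    · exact absurd (g.injective (h2.symm.trans h1)) hx
    · rw [← h1, ← h2, hζζ]
  refine Equiv.ext fun x => ?_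
  by_cases hx : ζ x = x
  · suffices hgx : ζ (g x) = g x from (congrArg g hx).trans hgx.symm
    by_contra hgx
    exact hgx (by rw [← hgg (ζ (g x)), key _ hgx, hgg, hx])
  · exact key x hx

variable {α : Type u} {S : Finset ℕ} {f : ℕ → Perm α} {z : ℕ}

theorem IsString.commute_max_of_lt (h : IsString S f) (hz : z ∈ S) (hmax : ∀ j ∈ S, j ≤ z) {j : ℕ}
    (hj : j ∈ S) (hjz : j + 1 ≠ z) : Commute (f j) (f z) := by
  rcases (hmax j hj).eq_or_lt with rfl | hlt
  · exact Commute.refl _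
  · exact h.commute j hj z hz (by omega)

variable [Finite α]

theorem orbitCount_le_card (H : Subgroup (Perm α)) : orbitCount H ≤ Nat.card α :=
  Nat.card_le_card_of_surjective (Quotient.mk _) Quotient.mk_surjective

theorem IsString.card_add_orbitCount_alternative (h : IsString S f) (hz : z ∈ S)
    (hc : ∀ j ∈ S, Commute (f j) (f z))
    (hcycles : ∀ (J : Finset ℕ) (g : ℕ → Perm (Cycles (f z))), IsString J g →
      J.card + orbitCount (Subgroup.closure (g '' J)) ≤ Nat.card (Cycles (f z))) :
    S.card + orbitCount (Subgroup.closure (f '' S)) + 1 ≤ Nat.card α ∨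
      (S.card + orbitCount (Subgroup.closure (f '' S)) ≤ Nat.card α ∧
        ∀ g ∈ Subgroup.closure (f '' S), ∀ x, f z x ≠ x → x = g x ∨ f z x = g x) := by
  have hζ := h.mul_self z hz
  obtain ⟨F, hF, hmap⟩ := h.exists_centralizer_lift hc
  have hS := hmap S subset_rfl
  have hmem : f z ∈ (Subgroup.closure (F '' S)).map (Subgroup.subtype _) :=
    hS ▸ Subgroup.subset_closure ⟨z, hz, rfl⟩
  refine (hF.central_alternative hζ hmem hcycles).imp (hS ▸ ·) fun ⟨hle, hfix⟩ => ⟨hS ▸ hle, ?_⟩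
  rw [← hS]
  rintro _ ⟨g, hg, rfl⟩ x hx
  have := hfix g hg _ (toCycle_mem_movedCycles.mpr hx)
  rwa [cyclePerm_toCycle, eq_comm, toCycle_eq_iff, sameCycle_iff_of_mul_self hζ] at this

/- Induction on the degree: the greatest member `f z` commutes with all members except possibly
`f (z - 1)`; without it the group acts on the cycles of `f z`, which are fewer than the points. -/
theorem IsString.card_add_orbitCount_le (h : IsString S f) :
    S.card + orbitCount (Subgroup.closure (f '' S)) ≤ Nat.card α := by
  induction hn : Nat.card α using Nat.strong_induction_on generalizing α S f with
  | _ n ih =>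
  subst hn
  rcases S.eq_empty_or_nonempty with rfl | hne
  · simpa using orbitCount_le_card _
  obtain ⟨z, hzS, hmax⟩ := S.exists_max_image id hne
  have hcycles : ∀ (J : Finset ℕ) (g : ℕ → Perm (Cycles (f z))), IsString J g →
      J.card + orbitCount (Subgroup.closure (g '' J)) ≤ Nat.card (Cycles (f z)) :=
    fun J g hJ => ih _ (card_cycles_lt (h.ne_one hzS)) hJ rfl
  by_cases hc : ∀ j ∈ S, Commute (f j) (f z)
  · have := h.card_add_orbitCount_alternative hzS hc hcycles
    omega
  push Not at hc
  obtain ⟨y, hyS, hy⟩ := hc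
  have hyz : y + 1 = z := by_contra fun hyz => hy (h.commute_max_of_lt hzS hmax hyS hyz)
  have hsub : S.erase y ⊆ S := Finset.erase_subset y S
  have hle : Subgroup.closure (f '' ↑(S.erase y)) ≤ Subgroup.closure (f '' S) :=
    Subgroup.closure_mono (Set.image_mono (by exact_mod_cast hsub))
  have hzS' : z ∈ S.erase y := Finset.mem_erase.mpr ⟨by omega, hzS⟩
  have halt := (h.mono hsub).card_add_orbitCount_alternative hzS'
    (fun j hj => h.commute_max_of_lt hzS hmax (hsub hj)
      (by have := Finset.ne_of_mem_erase hj; omega)) hcycles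
  have hcard := Finset.card_erase_add_one hyS
  have hanti := orbitCount_anti hle
  by_contra hcon
  obtain ⟨hbound, hpairs⟩ := halt.resolve_left (by omega)
  refine hy (commute_of_apply_eq_or_eq (h.mul_self z hzS) (h.mul_self y hyS) fun x hx => ?_)
  have horb := setoid_eq_of_le_of_card_le (orbitRel_mono hle)
    (show orbitCount _ ≤ orbitCount _ by omega)
  have hrel : MulAction.orbitRel (Subgroup.closure (f '' ↑(S.erase y))) α (f y x) x :=
    horb ▸ ⟨⟨f y, Subgroup.subset_closure ⟨y, hyS, rfl⟩⟩, rfl⟩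
  obtain ⟨g, hg⟩ := hrel
  exact hg ▸ hpairs g.1 g.2 x hx

end RankBound

section CentralizedTransitive

variable {α : Type*}

theorem apply_ne_self_of_commute {H : Subgroup (Perm α)} [MulAction.IsPretransitive H α]
    {ζ : Perm α} (hc : ∀ g ∈ H, Commute g ζ) (h1 : ζ ≠ 1) (x : α) : ζ x ≠ x := by
  refine fun hx => h1 (Equiv.ext fun y => ?_)
  obtain ⟨g, rfl⟩ := MulAction.exists_smul_eq H x y
  calc ζ (g.1 x) = g.1 (ζ x) := congrArg (fun k : Perm α => k x) (hc g g.2).eq.symm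
    _ = g.1 x := by rw [hx]

theorem card_le_two_mul_card_cycles [Finite α] {ζ : Perm α} (hζ : ζ * ζ = 1) :
    Nat.card α ≤ 2 * Nat.card (Cycles ζ) := by
  have hsurj : Function.Surjective
      (Sum.elim Quotient.out (ζ ∘ Quotient.out) : Cycles ζ ⊕ Cycles ζ → α) := by
    intro x
    have := toCycle_eq_iff.mp (Quotient.out_eq (toCycle ζ x))
    rcases (sameCycle_iff_of_mul_self hζ).mp this with h | h
    · exact ⟨.inl _, h⟩
    · exact ⟨.inr _, h⟩
  rw [two_mul, ← Nat.card_sum]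
  exact Nat.card_le_card_of_surjective _ hsurj

theorem isPretransitive_map_cyclePerm {ζ : Perm α} {H : Subgroup (Subgroup.centralizer {ζ})}
    (hH : MulAction.IsPretransitive (H.map (Subgroup.subtype _)) α) :
    MulAction.IsPretransitive (H.map (cyclePerm ζ)) (Cycles ζ) where
  exists_smul_eq := by
    rintro ⟨x⟩ ⟨y⟩
    obtain ⟨⟨_, g, hg, rfl⟩, hgx⟩ := hH.exists_smul_eq x y
    exact ⟨⟨_, Subgroup.mem_map_of_mem _ hg⟩, congrArg (toCycle ζ) hgx⟩

theorem IsString.card_add_three_le [Finite α] {z : ℕ} {S : Finset ℕ} {f : ℕ → Perm α}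
    (h : IsString S f) (hz : z ∈ S) (hc : ∀ j ∈ S, Commute (f j) (f z))
    [htrans : MulAction.IsPretransitive (Subgroup.closure (f '' S)) α] (hα : 7 ≤ Nat.card α) :
    S.card + 3 ≤ Nat.card α := by
  have hζ := h.mul_self z hz
  obtain ⟨F, hF, hmap⟩ := h.exists_centralizer_lift hc
  have hmoved : movedCycles (f z) = Set.univ := Set.eq_univ_of_forall <| Quotient.ind fun x =>
    toCycle_mem_movedCycles.mpr <| apply_ne_self_of_commute (H := Subgroup.closure (f '' S))
      (fun g hg => Subgroup.mem_centralizer_singleton_iff.mp <|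
        Subgroup.map_subtype_le _ (hmap S subset_rfl ▸ hg)) (h.ne_one hz) x
  have hdouble := card_cycles_add_ncard_movedCycles_le (ζ := f z)
  rw [hmoved, Set.ncard_univ] at hdouble
  have hhalf := card_le_two_mul_card_cycles hζ
  obtain ⟨J, hJS, hstr, hJ⟩ := hF.exists_image (cyclePerm (f z))
  obtain ⟨v, hsep, -⟩ := hF.exists_separated hζ hJS hJ
  have hT : MulAction.IsPretransitive
      (Subgroup.closure ((fun i => cyclePerm (f z) (F i)) '' J)) (Cycles (f z)) := by
    rw [hJ, ← Set.image_image, ← MonoidHom.map_closure]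
    exact isPretransitive_map_cyclePerm (hmap S subset_rfl ▸ htrans)
  have := Fintype.ofFinite (Cycles (f z))
  have hker := hsep.card_add_two_le_of_isPretransitive
    (fun k hk j φ hφ => comp_mem_restrictSubmodule hJS j.2 hk hφ)
    (by rw [← Nat.card_eq_fintype_card]; omega)
  rw [Fintype.card_coe, ← Nat.card_eq_fintype_card] at hker
  have hquot := hstr.card_add_orbitCount_le
  have : Nonempty (Cycles (f z)) := Finite.card_pos_iff.mp (by omega)
  have horb := orbitCount_pos (Subgroup.closure ((fun i => cyclePerm (f z) (F i)) '' J))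
  have hsum := Finset.card_sdiff_add_card_eq_card hJS
  omega

end CentralizedTransitive

/-! ### Orders of string groups and commuting pairs -/

section Order

variable {G : Type*} [Group G]

theorem commute_of_mem_closure {s t : Set G} (h : ∀ a ∈ s, ∀ b ∈ t, Commute a b) {a b : G}
    (ha : a ∈ Subgroup.closure s) (hb : b ∈ Subgroup.closure t) : Commute a b := by
  have hle : Subgroup.closure t ≤ Subgroup.centralizer (Subgroup.closure s) := by
    rw [Subgroup.centralizer_closure, Subgroup.closure_le]
    exact fun b hb => Subgroup.mem_centralizer_iff.mpr fun a ha => h a ha b hb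
  exact Subgroup.mem_centralizer_iff.mp (hle hb) a ha

theorem exists_mul_eq_of_mem_sup {A B : Subgroup G} (hc : ∀ a ∈ A, ∀ b ∈ B, Commute a b) {g : G}
    (hg : g ∈ A ⊔ B) : ∃ a ∈ A, ∃ b ∈ B, a * b = g := by
  rw [← A.range_subtype, ← B.range_subtype,
    ← MonoidHom.noncommCoprod_range _ _ fun (a : A) (b : B) => hc a a.2 b b.2] at hg
  obtain ⟨⟨a, b⟩, rfl⟩ := hg
  exact ⟨a, a.2, b, b.2, rfl⟩

variable [Finite G] {f : ℕ → G} {T R : Finset ℕ}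

theorem two_mul_card_le_of_lt {H K : Subgroup G} (h : H < K) : 2 * Nat.card H ≤ Nat.card K := by
  obtain ⟨c, hc⟩ := Subgroup.card_dvd_of_le h.le
  have hlt : Nat.card H < Nat.card K := Set.ncard_lt_ncard (SetLike.coe_ssubset_coe.mpr h)
  rw [hc, mul_comm]
  refine Nat.mul_le_mul_left _ ?_
  by_contra! hlt2
  interval_cases c <;> omega

namespace IsString

theorem card_closure_mul_two_pow_le (h : IsString (T ∪ R) f) (hd : Disjoint T R) :
    Nat.card (Subgroup.closure (f '' T)) * 2 ^ R.card ≤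
      Nat.card (Subgroup.closure (f '' ↑(T ∪ R))) := by
  induction R using Finset.induction_on with
  | empty => simp
  | insert a R ha ih =>
    obtain ⟨haT, hd⟩ := Finset.disjoint_insert_right.mp hd
    rw [Finset.union_insert] at h ⊢
    have hsub : T ∪ R ⊆ insert a (T ∪ R) := Finset.subset_insert _ _
    have hlt : Subgroup.closure (f '' ↑(T ∪ R)) < Subgroup.closure (f '' ↑(insert a (T ∪ R))) := by
      have haS := Finset.mem_insert_self a (T ∪ R)
      refine SetLike.lt_iff_le_and_exists.mpr ⟨Subgroup.closure_mono (Set.image_mono ?_), f a,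
        Subgroup.subset_closure ⟨a, haS, rfl⟩, h.notMem_closure haS fun j hj => ⟨hsub hj, ?_⟩⟩
      · exact_mod_cast hsub
      · rintro rfl
        simp [haT, ha] at hj
    calc Nat.card (Subgroup.closure (f '' T)) * 2 ^ (insert a R).card
        = 2 * (Nat.card (Subgroup.closure (f '' T)) * 2 ^ R.card) := by
          rw [Finset.card_insert_of_notMem ha, pow_succ]; ring
      _ ≤ 2 * Nat.card (Subgroup.closure (f '' ↑(T ∪ R))) :=
          Nat.mul_le_mul_left _ (ih (h.mono hsub) hd)
      _ ≤ _ := two_mul_card_le_of_lt hlt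

theorem two_pow_card_le (h : IsString T f) : 2 ^ T.card ≤ Nat.card (Subgroup.closure (f '' T)) := by
  have := IsString.card_closure_mul_two_pow_le (T := ∅) (by rwa [Finset.empty_union])
    (Finset.disjoint_empty_left T)
  simpa using this

/- Two noncommuting members generate a group of order at least `4`, and not exactly `4` since
groups of order `p ^ 2` are commutative. -/
theorem five_mul_two_pow_le (h : IsString T f) {j k : ℕ} (hj : j ∈ T) (hk : k ∈ T)
    (hjk : ¬ Commute (f j) (f k)) :
    5 * 2 ^ (T.card - 2) ≤ Nat.card (Subgroup.closure (f '' T)) := by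
  have hne : j ≠ k := by rintro rfl; exact hjk (Commute.refl _)
  have hsub : {j, k} ⊆ T := Finset.insert_subset hj (Finset.singleton_subset_iff.mpr hk)
  have hunion : {j, k} ∪ (T \ {j, k}) = T := Finset.union_sdiff_of_subset hsub
  have hfour : 2 ^ 2 ≤ Nat.card (Subgroup.closure (f '' ↑({j, k} : Finset ℕ))) :=
    Finset.card_pair hne ▸ (h.mono hsub).two_pow_card_le
  have hnot : Nat.card (Subgroup.closure (f '' ↑({j, k} : Finset ℕ))) ≠ 2 ^ 2 := fun hcard => by
    have := IsPGroup.isMulCommutative_of_card_eq_prime_sq (p := 2) hcard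
    have hmem : ∀ i ∈ ({j, k} : Finset ℕ), f i ∈ Subgroup.closure (f '' ↑({j, k} : Finset ℕ)) :=
      fun i hi => Subgroup.subset_closure ⟨i, hi, rfl⟩
    exact hjk (setLike_mul_comm (hmem j (by simp)) (hmem k (by simp)))
  have hrest := (hunion.symm ▸ h).card_closure_mul_two_pow_le Finset.disjoint_sdiff
  rw [hunion, Finset.card_sdiff_of_subset hsub, Finset.card_pair hne] at hrest
  exact (Nat.mul_le_mul_right _ (by omega)).trans hrest

end IsString

end Order

section TransitivePair

variable {α : Type*} {A B : Subgroup (Perm α)} {x y : α}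

/-- Two commuting permutation groups whose product is transitive. -/
structure IsTransitivePair (A B : Subgroup (Perm α)) : Prop where
  commute : ∀ a ∈ A, ∀ b ∈ B, Commute a b
  exists_apply_eq : ∀ x y, ∃ a ∈ A, ∃ b ∈ B, a (b x) = y

theorem mem_orbit_iff_exists_apply_eq : y ∈ MulAction.orbit A x ↔ ∃ a ∈ A, a x = y :=
  ⟨fun ⟨a, h⟩ => ⟨a.1, a.2, h⟩, fun ⟨a, ha, h⟩ => ⟨⟨a, ha⟩, h⟩⟩

theorem isTransitivePair_of_isPretransitive_sup (hc : ∀ a ∈ A, ∀ b ∈ B, Commute a b)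
    (ht : MulAction.IsPretransitive ↥(A ⊔ B) α) : IsTransitivePair A B where
  commute := hc
  exists_apply_eq x y := by
    obtain ⟨⟨g, hg⟩, hgx⟩ := ht.exists_smul_eq x y
    obtain ⟨a, ha, b, hb, rfl⟩ := exists_mul_eq_of_mem_sup hc hg
    exact ⟨a, ha, b, hb, hgx⟩

namespace IsTransitivePair

theorem apply_comm (h : IsTransitivePair A B) {a b : Perm α} (ha : a ∈ A) (hb : b ∈ B) (x : α) :
    a (b x) = b (a x) :=
  congrArg (fun g : Perm α => g x) (h.commute a ha b hb)

theorem symm (h : IsTransitivePair A B) : IsTransitivePair B A where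
  commute b hb a ha := (h.commute a ha b hb).symm
  exists_apply_eq x y := by
    obtain ⟨a, ha, b, hb, rfl⟩ := h.exists_apply_eq x y
    exact ⟨b, hb, a, ha, (h.apply_comm ha hb x).symm⟩

theorem eq_one_of_forall_mem_orbit (h : IsTransitivePair A B) {a : Perm α} (ha : a ∈ A)
    (hfix : ∀ y ∈ MulAction.orbit A x, a y = y) : a = 1 := by
  refine Equiv.ext fun y => ?_
  obtain ⟨b, hb, a', ha', rfl⟩ := h.symm.exists_apply_eq x y
  rw [h.apply_comm ha hb, hfix _ (mem_orbit_iff_exists_apply_eq.mpr ⟨a', ha', rfl⟩),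
    Equiv.Perm.one_apply]

theorem apply_eq_self_of_mem_orbit (h : IsTransitivePair A B) {a : Perm α} (ha : a ∈ A)
    (hax : a x = x) (hy : y ∈ MulAction.orbit B x) : a y = y := by
  obtain ⟨b, hb, rfl⟩ := mem_orbit_iff_exists_apply_eq.mp hy
  rw [h.apply_comm ha hb, hax]

theorem exists_apply_notMem_orbit (h : IsTransitivePair A B)
    (hx : MulAction.orbit A x ≠ Set.univ) : ∃ b ∈ B, b x ∉ MulAction.orbit A x := by
  contrapose! hx
  refine Set.eq_univ_of_forall fun y => ?_
  obtain ⟨a, ha, b, hb, rfl⟩ := h.exists_apply_eq x y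
  exact MulAction.mapsTo_smul_orbit (⟨a, ha⟩ : A) x (hx b hb)

theorem apply_notMem_orbit (h : IsTransitivePair A B) {b : Perm α} (hb : b ∈ B)
    (hbx : b x ∉ MulAction.orbit A x) (hy : y ∈ MulAction.orbit A x) :
    b y ∉ MulAction.orbit A x := by
  obtain ⟨a, ha, rfl⟩ := mem_orbit_iff_exists_apply_eq.mp hy
  rw [← h.apply_comm ha hb]
  exact fun hmem => hbx <| inv_smul_smul (⟨a, ha⟩ : A) (b x) ▸
    MulAction.mapsTo_smul_orbit (⟨a, ha⟩ : A)⁻¹ x hmem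

variable [Finite α]

theorem two_mul_ncard_orbit_le (h : IsTransitivePair A B) (hx : MulAction.orbit A x ≠ Set.univ) :
    2 * (MulAction.orbit A x).ncard ≤ Nat.card α := by
  obtain ⟨b, hb, hbx⟩ := h.exists_apply_notMem_orbit hx
  have hdisj : Disjoint (MulAction.orbit A x) (b '' MulAction.orbit A x) := by
    rw [Set.disjoint_right]
    rintro _ ⟨y, hy, rfl⟩
    exact h.apply_notMem_orbit hb hbx hy
  calc 2 * (MulAction.orbit A x).ncard
      = (MulAction.orbit A x ∪ b '' MulAction.orbit A x).ncard := by
        rw [Set.ncard_union_eq hdisj, Set.ncard_image_of_injective _ b.injective, two_mul]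
    _ ≤ Nat.card α := Set.ncard_le_card _

/- A member of `A` fixing `x` fixes the orbit of `x` under `B` pointwise, so it is determined by
the image of `y`; for suitable `b ∈ B`, the `b`-translates of these images are new. -/
theorem two_mul_card_stabilizer_le (h : IsTransitivePair A B)
    (hxy : MulAction.orbit B y = (MulAction.orbit B x)ᶜ) (hy : MulAction.orbit A y ≠ Set.univ) :
    2 * Nat.card (MulAction.stabilizer A x) ≤ (MulAction.orbit B y).ncard := by
  obtain ⟨b, hb, hby⟩ := h.exists_apply_notMem_orbit hy
  set Q := MulAction.orbit (MulAction.stabilizer A x) y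
  have hQA : Q ⊆ MulAction.orbit A y := by rintro _ ⟨g, rfl⟩; exact ⟨g.1, rfl⟩
  have hQB : Q ⊆ MulAction.orbit B y := by
    rw [hxy]
    rintro _ ⟨g, rfl⟩ hgy
    have hinv : g⁻¹ • g • y = g • y :=
      h.apply_eq_self_of_mem_orbit (inv_mem g.1.2) (MulAction.mem_stabilizer_iff.mp (g⁻¹).2) hgy
    rw [inv_smul_smul] at hinv
    exact (hxy ▸ MulAction.mem_orbit_self y : y ∈ (MulAction.orbit B x)ᶜ) (hinv ▸ hgy)
  have hstab : MulAction.stabilizer (MulAction.stabilizer A x) y = ⊥ := by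
    refine (Subgroup.eq_bot_iff_forall _).mpr fun g hgy => Subtype.ext (Subtype.ext ?_)
    refine Equiv.ext fun w => ?_
    by_cases hw : w ∈ MulAction.orbit B x
    · exact h.apply_eq_self_of_mem_orbit g.1.2 (MulAction.mem_stabilizer_iff.mp g.2) hw
    · exact h.apply_eq_self_of_mem_orbit g.1.2 hgy (hxy ▸ hw)
  have hcard : Nat.card (MulAction.stabilizer A x) = Q.ncard := by
    rw [← MulAction.index_stabilizer, hstab, Subgroup.index_bot]
  have hdisj : Disjoint Q (b '' Q) := by
    rw [Set.disjoint_right]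
    rintro _ ⟨w, hw, rfl⟩
    exact fun hmem => h.apply_notMem_orbit hb hby (hQA hw) (hQA hmem)
  calc 2 * Nat.card (MulAction.stabilizer A x) = (Q ∪ b '' Q).ncard := by
        rw [Set.ncard_union_eq hdisj, Set.ncard_image_of_injective _ b.injective, hcard, two_mul]
    _ ≤ (MulAction.orbit B y).ncard := Set.ncard_le_ncard <| Set.union_subset hQB <|
        Set.image_subset_iff.mpr fun w hw => MulAction.mapsTo_smul_orbit (⟨b, hb⟩ : B) y (hQB hw)

end IsTransitivePair

end TransitivePair

section StringPair

variable {α : Type*} {A B : Subgroup (Perm α)} {T : Finset ℕ} {f : ℕ → Perm α}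

namespace IsTransitivePair

theorem card_eq_ncard_orbit_of_commute (h : IsTransitivePair A B)
    (hA : ∀ a ∈ A, ∀ b ∈ A, Commute a b) (x : α) :
    Nat.card A = (MulAction.orbit A x).ncard := by
  have hstab : MulAction.stabilizer A x = ⊥ := by
    refine (Subgroup.eq_bot_iff_forall _).mpr fun g hg => Subtype.ext ?_
    refine h.eq_one_of_forall_mem_orbit (x := x) g.2 fun y hy => ?_
    obtain ⟨a, ha, rfl⟩ := mem_orbit_iff_exists_apply_eq.mp hy
    calc g.1 (a x) = a (g.1 x) := congrArg (fun k : Perm α => k x) (hA g g.2 a ha).eq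
      _ = a x := congrArg a hg
  rw [← MulAction.index_stabilizer, hstab, Subgroup.index_bot]

variable [Finite α]

theorem card_add_one_le_ncard_orbit (h : IsTransitivePair (Subgroup.closure (f '' T)) B)
    (hT : IsString T f) (x : α) :
    T.card + 1 ≤ (MulAction.orbit (Subgroup.closure (f '' T)) x).ncard := by
  set A := Subgroup.closure (f '' T)
  obtain ⟨F, -, hF⟩ := hT.exists_lift A fun i hi => Subgroup.subset_closure ⟨i, hi, rfl⟩
  have hinj : Function.Injective (MulAction.toPermHom A (MulAction.orbit A x)) := by
    refine (injective_iff_map_eq_one _).mpr fun a ha => Subtype.ext ?_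
    exact h.eq_one_of_forall_mem_orbit (x := x) a.2 fun y hy =>
      congrArg Subtype.val (congrArg (fun g : Perm (MulAction.orbit A x) => g ⟨y, hy⟩) ha)
  have hrank := (hF.map _ hinj).card_add_orbitCount_le
  have : Nonempty (MulAction.orbit A x) := ⟨⟨x, MulAction.mem_orbit_self x⟩⟩
  have horb := orbitCount_pos (Subgroup.closure
    ((fun i => MulAction.toPermHom A (MulAction.orbit A x) (F i)) '' T))
  rw [Nat.card_coe_set_eq] at hrank
  omega

theorem two_mul_card_le_sq {m : ℕ} (h : IsTransitivePair A B) (hα : Nat.card α = 2 * m)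
    (hm : 0 < m) (hA : ∀ x : α, (MulAction.orbit A x).ncard = m)
    (hB : ∀ x : α, (MulAction.orbit B x).ncard = m) : 2 * Nat.card A ≤ m * m := by
  have : Nonempty α := Finite.card_pos_iff.mp (by omega)
  obtain ⟨x⟩ := this
  have hcompl : ((MulAction.orbit B x)ᶜ).ncard = m := by
    have := Set.ncard_add_ncard_compl (MulAction.orbit B x)
    rw [hB x] at this
    omega
  obtain ⟨y, hy⟩ := (Set.ncard_pos (Set.toFinite _)).mp (hcompl ▸ hm)
  have hsub : MulAction.orbit B y ⊆ (MulAction.orbit B x)ᶜ :=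
    ((MulAction.orbit.eq_or_disjoint x y).resolve_left fun he =>
      hy (he ▸ MulAction.mem_orbit_self y)).subset_compl_left
  have hxy := Set.eq_of_subset_of_ncard_le hsub (by rw [hcompl, hB y])
  have hne : MulAction.orbit A y ≠ Set.univ := fun huniv => by
    have := huniv ▸ hA y
    rw [Set.ncard_univ] at this
    omega
  have hstab := hB y ▸ h.two_mul_card_stabilizer_le hxy hne
  rw [← Subgroup.index_mul_card (MulAction.stabilizer A x), MulAction.index_stabilizer, hA x,
    mul_left_comm]
  exact Nat.mul_le_mul_left m hstab

end IsTransitivePair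

theorem add_four_sq_lt (k : ℕ) : (k + 4) * (k + 4) < 5 * 2 ^ (k + 2) := by
  induction k with
  | zero => norm_num
  | succ k ih => rw [add_right_comm k 1 2, pow_succ]; nlinarith

theorem IsString.not_forall_ncard_orbit_eq [Finite α] (hT : IsString T f) (hcard : 3 ≤ T.card)
    (h : IsTransitivePair (Subgroup.closure (f '' T)) B) (hα : Nat.card α = 2 * (T.card + 1))
    (hA : ∀ x : α, (MulAction.orbit (Subgroup.closure (f '' T)) x).ncard = T.card + 1) :
    ¬ ∀ x : α, (MulAction.orbit B x).ncard = T.card + 1 := fun hB => by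
  obtain ⟨k, hk⟩ := Nat.exists_eq_add_of_le' hcard
  by_cases hcomm : ∀ i ∈ T, ∀ j ∈ T, Commute (f i) (f j)
  · have : Nonempty α := Finite.card_pos_iff.mp (by omega)
    obtain ⟨x⟩ := this
    have hregular := h.card_eq_ncard_orbit_of_commute (fun a ha b hb => commute_of_mem_closure
      (by rintro _ ⟨i, hi, rfl⟩ _ ⟨j, hj, rfl⟩; exact hcomm i hi j hj) ha hb) x
    have hpow := hT.two_pow_card_le
    rw [hregular, hA x, hk, pow_succ] at hpow
    have := (k + 2).lt_two_pow_self
    omega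
  · push Not at hcomm
    obtain ⟨i, hi, j, hj, hij⟩ := hcomm
    have hlow := hT.five_mul_two_pow_le hi hj hij
    have hhigh := h.two_mul_card_le_sq hα (by omega) hA hB
    have := add_four_sq_lt k
    rw [show T.card - 2 = k + 1 by omega] at hlow
    rw [show T.card + 1 = k + 4 by omega] at hhigh
    rw [pow_succ] at this
    omega

end StringPair

section Intransitive

variable {α : Type*} {r i : ℕ} {f : ℕ → Perm α}

theorem IsString.commute_of_add_one_lt (h : IsString (Finset.range r) f) {j k : ℕ}
    (hj : j < r) (hk : k < r) (hjk : j + 1 < k ∨ k + 1 < j ∨ j = k) : Commute (f j) (f k) := by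
  rcases hjk with hjk | hjk | rfl
  · exact h.commute j (by simpa) k (by simpa) hjk
  · exact (h.commute k (by simpa) j (by simpa) hjk).symm
  · exact Commute.refl _

theorem IsString.isTransitivePair_range_Ioo (h : IsString (Finset.range r) f)
    (ht : MulAction.IsPretransitive (Subgroup.closure (f '' ↑((Finset.range r).erase i))) α)
    (hi : i < r) :
    IsTransitivePair (Subgroup.closure (f '' ↑(Finset.range i)))
      (Subgroup.closure (f '' ↑(Finset.Ioo i r))) := by
  refine isTransitivePair_of_isPretransitive_sup
    (fun a ha b hb => commute_of_mem_closure ?_ ha hb) ?_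
  · rintro _ ⟨j, hj, rfl⟩ _ ⟨k, hk, rfl⟩
    simp only [Finset.coe_range, Set.mem_Iio, Finset.coe_Ioo, Set.mem_Ioo] at hj hk
    exact h.commute_of_add_one_lt (by omega) hk.2 (by omega)
  · rw [← Subgroup.closure_union, ← Set.image_union]
    have hunion : (↑(Finset.range i) ∪ ↑(Finset.Ioo i r) : Set ℕ) =
        ↑((Finset.range r).erase i) := by
      ext j
      simp only [Finset.coe_range, Finset.coe_Ioo, Finset.coe_erase, Set.mem_union, Set.mem_Iio,
        Set.mem_Ioo, Set.mem_sdiff, Set.mem_singleton_iff]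
      omega
    rwa [hunion]

theorem IsString.orbit_ne_univ_of_commute [Finite α] (h : IsString (Finset.range r) f)
    (hr : 6 ≤ r) (hα : Nat.card α = r + 1) {j z : ℕ} (hj : j < r) (hz : z < r) (hzj : z ≠ j)
    (hc : ∀ k < r, k ≠ j → Commute (f k) (f z)) {U : Finset ℕ} (hU : U ⊆ (Finset.range r).erase j)
    (x : α) : MulAction.orbit (Subgroup.closure (f '' U)) x ≠ Set.univ := by
  intro hx
  have ht : MulAction.IsPretransitive (Subgroup.closure (f '' ↑((Finset.range r).erase j))) α := by
    refine (MulAction.isPretransitive_iff_base x).mpr fun y => ?_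
    obtain ⟨g, hg⟩ := hx.symm ▸ Set.mem_univ y
    exact ⟨⟨g, Subgroup.closure_mono (Set.image_mono (by exact_mod_cast hU)) g.2⟩, hg⟩
  have hrank := (h.mono (Finset.erase_subset j _)).card_add_three_le (z := z) (by simp [hz, hzj])
    (fun k hk => by
      rw [Finset.mem_erase, Finset.mem_range] at hk
      exact hc k hk.2 hk.1) (by omega)
  rw [Finset.card_erase_of_mem (by simpa), Finset.card_range] at hrank
  omega

theorem IsString.not_isPretransitive_erase [Finite α] (h : IsString (Finset.range r) f)
    (hr : 6 ≤ r) (hα : Nat.card α = r + 1) (hi : 0 < i) (hir : i + 1 < r) :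
    ¬ MulAction.IsPretransitive (Subgroup.closure (f '' ↑((Finset.range r).erase i))) α := by
  intro ht
  have hpair := h.isTransitivePair_range_Ioo ht (by omega)
  set A := Subgroup.closure (f '' ↑(Finset.range i))
  set B := Subgroup.closure (f '' ↑(Finset.Ioo i r))
  have hsA : IsString (Finset.range i) f :=
    h.mono fun j hj => by simp only [Finset.mem_range] at hj ⊢; omega
  have hsB : IsString (Finset.Ioo i r) f :=
    h.mono fun j hj => by simp only [Finset.mem_range, Finset.mem_Ioo] at hj ⊢; omega
  have hAx : ∀ x, MulAction.orbit A x ≠ (Set.univ : Set α) :=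
    h.orbit_ne_univ_of_commute hr hα (j := r - 2) (z := r - 1) (by omega) (by omega) (by omega)
      (fun k hk hkj => h.commute_of_add_one_lt hk (by omega) (by omega))
      fun k hk => by simp only [Finset.mem_erase, Finset.mem_range] at hk ⊢; omega
  have hBx : ∀ x, MulAction.orbit B x ≠ (Set.univ : Set α) :=
    h.orbit_ne_univ_of_commute hr hα (j := 1) (z := 0) (by omega) (by omega) (by omega)
      (fun k hk hkj => h.commute_of_add_one_lt hk (by omega) (by omega))
      fun k hk => by simp only [Finset.mem_erase, Finset.mem_range, Finset.mem_Ioo] at hk ⊢; omega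
  have hA1 : ∀ x, i + 1 ≤ (MulAction.orbit A x).ncard := fun x =>
    (Finset.card_range i ▸ hpair.card_add_one_le_ncard_orbit hsA x :)
  have hB1 : ∀ x, r - i - 1 + 1 ≤ (MulAction.orbit B x).ncard := fun x =>
    (Nat.card_Ioo i r ▸ hpair.symm.card_add_one_le_ncard_orbit hsB x :)
  have hA2 : ∀ x, 2 * (MulAction.orbit A x).ncard ≤ Nat.card α := fun x =>
    hpair.two_mul_ncard_orbit_le (hAx x)
  have hB2 : ∀ x, 2 * (MulAction.orbit B x).ncard ≤ Nat.card α := fun x =>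
    hpair.symm.two_mul_ncard_orbit_le (hBx x)
  have hsize : ∀ y : α, (MulAction.orbit A y).ncard = i + 1 ∧ (MulAction.orbit B y).ncard = i + 1 ∧
      r + 1 = 2 * (i + 1) := fun y => by
    have := hA1 y; have := hA2 y; have := hB1 y; have := hB2 y
    omega
  have : Nonempty α := Finite.card_pos_iff.mp (by omega)
  obtain ⟨x⟩ := this
  have hr2 := (hsize x).2.2
  refine hsA.not_forall_ncard_orbit_eq ?_ hpair ?_ (fun y => ?_) fun y => ?_ <;>
    rw [Finset.card_range]
  exacts [by omega, hα.trans hr2, (hsize y).1, (hsize y).2.1]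

end Intransitive

/-! ### Marked edges and coboundaries -/

section Coboundary

variable {α : Type*} {r : ℕ} {f : ℕ → Perm α} {a : ℕ → α}

/-- The endpoints of the edge of label `j` marked at `a j`. -/
def edge (f : ℕ → Perm α) (a : ℕ → α) (j : ℕ) : Set α := {a j, f j (a j)}

variable (r f a) in
/-- The coboundary map of the graph on `α` whose edges are the first `r` marked ones. -/
def coboundary : (α → ZMod 2) →ₗ[ZMod 2] (Fin r → ZMod 2) :=
  LinearMap.funLeft (ZMod 2) (ZMod 2) (fun j : Fin r => a j) +
    LinearMap.funLeft (ZMod 2) (ZMod 2) (fun j : Fin r => f j (a j))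

theorem coboundary_apply (w : α → ZMod 2) (j : Fin r) :
    coboundary r f a w j = w (a j) + w (f j (a j)) := rfl

theorem coboundary_single_of_notMem [DecidableEq α] {x : α} {j : Fin r} (hx : x ∉ edge f a j) :
    coboundary r f a (Pi.single x 1) j = 0 := by
  simp only [edge, Set.mem_insert_iff, Set.mem_singleton_iff, not_or] at hx
  rw [coboundary_apply, Pi.single_eq_of_ne' hx.1, Pi.single_eq_of_ne' hx.2, add_zero]

theorem coboundary_single_of_mem [DecidableEq α] {x : α} {j : Fin r} (hj : f j (a j) ≠ a j)
    (hx : x ∈ edge f a j) : coboundary r f a (Pi.single x 1) j = 1 := by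
  rw [coboundary_apply]
  rcases hx with rfl | rfl
  · rw [Pi.single_eq_same, Pi.single_eq_of_ne hj, add_zero]
  · rw [Pi.single_eq_of_ne' hj, Pi.single_eq_same, zero_add]

theorem eq_of_coboundary_eq_zero [Finite α] (hα : Nat.card α = r + 1)
    (hsurj : Function.Surjective (coboundary r f a)) {w : α → ZMod 2}
    (hw : coboundary r f a w = 0) (x y : α) : w x = w y := by
  cases nonempty_fintype α
  have hker : Module.finrank (ZMod 2) (LinearMap.ker (coboundary r f a)) = 1 := by
    have hrank := LinearMap.finrank_range_add_finrank_ker (coboundary r f a)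
    rw [LinearMap.range_eq_top.mpr hsurj, finrank_top, Module.finrank_fintype_fun_eq_card,
      Module.finrank_fintype_fun_eq_card, Fintype.card_fin, ← Nat.card_eq_fintype_card, hα] at hrank
    omega
  have hone : (1 : α → ZMod 2) ∈ LinearMap.ker (coboundary r f a) :=
    LinearMap.mem_ker.mpr (funext fun _ => CharTwo.add_self_eq_zero 1)
  have hne : (⟨1, hone⟩ : LinearMap.ker (coboundary r f a)) ≠ 0 := fun h0 =>
    one_ne_zero (congrFun (congrArg Subtype.val h0) x)
  obtain ⟨c, hc⟩ := (finrank_eq_one_iff_of_nonzero' _ hne).mp hker ⟨w, hw⟩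
  obtain rfl : c • (1 : α → ZMod 2) = w := congrArg Subtype.val hc
  rfl

variable (r f a) in
/-- The marked edges are separated when the coboundary map is onto and each inner edge is the
coboundary of a function invariant under all other permutations. -/
structure HasSeparatedEdges : Prop where
  surjective : Function.Surjective (coboundary r f a)
  exists_invariant : ∀ l : Fin r, 0 < (l : ℕ) → (l : ℕ) + 1 < r →
    ∃ χ : α → ZMod 2, (∀ j < r, j ≠ l → ∀ x, χ (f j x) = χ x) ∧
      coboundary r f a χ = Pi.single l 1

theorem exists_mem_notMem_edge [Finite α] {i j : ℕ} (hi : f i (a i) ≠ a i) (hj : f j (a j) ≠ a j)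
    (hij : edge f a i ≠ edge f a j) : ∃ x ∈ edge f a i, x ∉ edge f a j :=
  Set.not_subset.mp fun hsub => hij <| Set.eq_of_subset_of_ncard_le hsub <| by
    rw [edge, edge, Set.ncard_pair hi.symm, Set.ncard_pair hj.symm]

theorem single_mem_range_coboundary [Finite α] {i k : Fin r} (hi : f i (a i) ≠ a i)
    (hik : ∃ x ∈ edge f a i, x ∉ edge f a k)
    (h : ∀ j, j ≠ i → j ≠ k → Pi.single j 1 ∈ LinearMap.range (coboundary r f a)) :
    Pi.single i 1 ∈ LinearMap.range (coboundary r f a) := by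
  classical
  obtain ⟨x, hxi, hxk⟩ := hik
  have hne : i ≠ k := fun he => hxk (he ▸ hxi)
  refine (Submodule.add_mem_iff_right _ (LinearMap.mem_range_self _ (Pi.single x 1))).mp <|
    mem_of_forall_single_mem fun j hj => h j ?_ ?_ <;> rintro rfl <;> refine hj ?_ <;>
    rw [Pi.add_apply]
  · rw [coboundary_single_of_mem hi hxi, Pi.single_eq_same]
    exact CharTwo.add_self_eq_zero 1
  · rw [coboundary_single_of_notMem hxk, Pi.single_eq_of_ne' hne, zero_add]

theorem hasSeparatedEdges_of_edge_ne [Finite α] (hr : 1 < r) (h0 : f 0 (a 0) ≠ a 0)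
    (hl : f (r - 1) (a (r - 1)) ≠ a (r - 1)) (hne : edge f a 0 ≠ edge f a (r - 1))
    (hχ : ∀ l : Fin r, 0 < (l : ℕ) → (l : ℕ) + 1 < r →
      ∃ χ : α → ZMod 2, (∀ j < r, j ≠ l → ∀ x, χ (f j x) = χ x) ∧
        coboundary r f a χ = Pi.single l 1) : HasSeparatedEdges r f a := by
  refine ⟨LinearMap.range_eq_top.mp ?_, hχ⟩
  obtain ⟨z, hz⟩ : ∃ z : Fin r, (z : ℕ) = 0 := ⟨⟨0, by omega⟩, rfl⟩
  obtain ⟨t, ht⟩ : ∃ t : Fin r, (t : ℕ) = r - 1 := ⟨⟨r - 1, by omega⟩, rfl⟩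
  have hinner : ∀ l, l ≠ z → l ≠ t → Pi.single l 1 ∈ LinearMap.range (coboundary r f a) :=
    fun l hlz hlt => by
      rw [Ne, Fin.ext_iff] at hlz hlt
      exact (hχ l (by omega) (by omega)).imp fun _ h => h.2
  refine Submodule.eq_top_iff'.mpr fun φ => mem_of_forall_single_mem fun l _ => ?_
  by_cases hlz : l = z
  · subst hlz
    refine single_mem_range_coboundary (k := t) (by rwa [hz]) ?_ hinner
    exact hz ▸ ht ▸ exists_mem_notMem_edge h0 hl hne
  by_cases hlt : l = t
  · subst hlt
    refine single_mem_range_coboundary (k := z) (by rwa [ht]) ?_ fun j hjt hjz => hinner j hjz hjt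
    exact hz ▸ ht ▸ exists_mem_notMem_edge hl h0 hne.symm
  · exact hinner l hlz hlt

namespace HasSeparatedEdges

theorem apply_ne_self (h : HasSeparatedEdges r f a) {j : ℕ} (hj : j < r) : f j (a j) ≠ a j := by
  obtain ⟨w, hw⟩ := h.surjective (Pi.single ⟨j, hj⟩ 1)
  intro he
  have hwj := congrFun hw ⟨j, hj⟩
  rw [coboundary_apply, he, CharTwo.add_self_eq_zero, Pi.single_eq_same] at hwj
  exact zero_ne_one hwj

theorem edge_ne (h : HasSeparatedEdges r f a) {i j : ℕ} (hi : i < r) (hj : j < r) (hij : i ≠ j) :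
    edge f a i ≠ edge f a j := by
  obtain ⟨w, hw⟩ := h.surjective (Pi.single ⟨i, hi⟩ 1)
  intro he
  have hwi : w (a i) + w (f i (a i)) = 1 := by
    simpa only [coboundary_apply, Pi.single_eq_same] using congrFun hw ⟨i, hi⟩
  have hwj : w (a j) + w (f j (a j)) = 0 := by
    simpa only [coboundary_apply, Pi.single_apply, Fin.mk.injEq, hij.symm, if_false]
      using congrFun hw ⟨j, hj⟩
  have hsum : w (a i) + w (f i (a i)) = w (a j) + w (f j (a j)) := by
    rcases Set.pair_eq_pair_iff.mp he with ⟨h1, h2⟩ | ⟨h1, h2⟩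
    · rw [h2, h1]
    · rw [h2, h1, add_comm]
  exact one_ne_zero (hwi.symm.trans (hsum.trans hwj))

variable [Finite α]

theorem eq_univ_of_forall_mem_iff (h : HasSeparatedEdges r f a) (hα : Nat.card α = r + 1)
    {W : Set α} (hne : W.Nonempty) (hW : ∀ j < r, a j ∈ W ↔ f j (a j) ∈ W) : W = Set.univ := by
  classical
  obtain ⟨x, hx⟩ := hne
  refine Set.eq_univ_of_forall fun y => ?_
  have hconst := eq_of_coboundary_eq_zero hα h.surjective (w := W.indicator 1)
    (funext fun j => by
      rw [coboundary_apply, Set.indicator_apply, Set.indicator_apply, if_congr (hW j j.2) rfl rfl]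
      exact CharTwo.add_self_eq_zero _) x y
  by_contra hy
  rw [Set.indicator_of_mem hx, Set.indicator_of_notMem hy] at hconst
  exact one_ne_zero hconst

theorem apply_eq_self_of_notMem (h : HasSeparatedEdges r f a) (hα : Nat.card α = r + 1)
    {j : ℕ} (hj : j < r) {x : α} (hxj : x ∉ edge f a j) (hx0 : x ∉ edge f a 0)
    (hxl : x ∉ edge f a (r - 1)) : f j x = x := by
  classical
  let X := LinearMap.eqLocus (LinearMap.funLeft (ZMod 2) (ZMod 2) (f j)) LinearMap.id
  obtain ⟨w, hwX, hw⟩ : coboundary r f a (Pi.single x 1) ∈ X.map (coboundary r f a) := by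
    refine mem_of_forall_single_mem fun l hl => ?_
    have hl' : ∀ k < r, x ∉ edge f a k → (l : ℕ) ≠ k := fun k _ hk hlk =>
      hl (coboundary_single_of_notMem (hlk ▸ hk))
    have := hl' j hj hxj
    have := hl' 0 (by omega) hx0
    have := hl' (r - 1) (by omega) hxl
    obtain ⟨χ, hχ, hDχ⟩ := h.exists_invariant l (by omega) (by omega)
    exact ⟨χ, funext fun y => hχ j hj (by omega) y, hDχ⟩
  have hconst := eq_of_coboundary_eq_zero hα h.surjective
    (w := Pi.single x 1 - w) (by rw [map_sub, hw, sub_self]) (f j x) x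
  have hwx : w (f j x) = w x := congrFun hwX x
  rw [Pi.sub_apply, Pi.sub_apply, hwx, sub_left_inj, Pi.single_eq_same] at hconst
  by_contra hne
  rw [Pi.single_eq_of_ne hne] at hconst
  exact zero_ne_one hconst

end HasSeparatedEdges

end Coboundary

section FrameExistence

variable {α : Type*} {r : ℕ} {f : ℕ → Perm α}

theorem isPretransitive_of_forall_apply_mem_orbit {H : Subgroup (Perm α)} {s : Set (Perm α)}
    (ht : MulAction.IsPretransitive (Subgroup.closure s) α)
    (h : ∀ g ∈ s, ∀ x, g x ∈ MulAction.orbit H x) : MulAction.IsPretransitive H α := by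
  have hall : ∀ g ∈ Subgroup.closure s, ∀ x, g x ∈ MulAction.orbit H x := fun g hg => by
    induction hg using Subgroup.closure_induction with
    | mem g hg => exact h g hg
    | one => exact MulAction.mem_orbit_self
    | mul g k _ _ hg hk => exact fun x => MulAction.orbit_eq_iff.mpr (hk x) ▸ hg (k x)
    | inv g _ hg =>
      exact fun x => MulAction.mem_orbit_symm.mp (by simpa using hg (g⁻¹ x))
  refine ⟨fun x y => ?_⟩
  obtain ⟨g, rfl⟩ := ht.exists_smul_eq x y
  exact hall g.1 g.2 x

theorem exists_moved_pair_ne {g k : Perm α} (hg : g * g = 1) (hk : k * k = 1) (hg1 : g ≠ 1)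
    (hk1 : k ≠ 1) (hgk : g ≠ k) :
    ∃ p q, g p ≠ p ∧ k q ≠ q ∧ ({p, g p} : Set α) ≠ {q, k q} := by
  by_contra! hpair
  have heq : ∀ p q, g p ≠ p → k q ≠ q → g p = k p ∧ g q = k q := fun p q hp hq => by
    rcases Set.pair_eq_pair_iff.mp (hpair p q hp hq) with ⟨rfl, h⟩ | ⟨rfl, h⟩
    · exact ⟨h, h⟩
    · have hkq := apply_apply_of_mul_self hk q
      refine ⟨h.trans hkq.symm, ?_⟩
      rw [← apply_apply_of_mul_self hg (k q), h]
  obtain ⟨p, hp⟩ : ∃ p, g p ≠ p := by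
    by_contra! hfix
    exact hg1 (Equiv.ext hfix)
  obtain ⟨q, hq⟩ : ∃ q, k q ≠ q := by
    by_contra! hfix
    exact hk1 (Equiv.ext hfix)
  refine hgk (Equiv.ext fun x => ?_)
  by_cases hx : g x = x
  · by_cases hx' : k x = x
    · rw [hx, hx']
    · exact (heq p x hp hx').2
  · exact (heq x q hx hq).1

namespace IsString

variable [Finite α]

theorem isPretransitive (h : IsString (Finset.range r) f) (hα : Nat.card α = r + 1) :
    MulAction.IsPretransitive (Subgroup.closure (f '' ↑(Finset.range r))) α := by
  have hrank := h.card_add_orbitCount_le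
  rw [Finset.card_range, hα] at hrank
  exact isPretransitive_of_orbitCount_le_one (by omega)

theorem exists_invariant_function (h : IsString (Finset.range r) f) (hr : 6 ≤ r)
    (hα : Nat.card α = r + 1) {i : ℕ} (hi : 0 < i) (hir : i + 1 < r) :
    ∃ p, ∃ χ : α → ZMod 2, (∀ j < r, j ≠ i → ∀ x, χ (f j x) = χ x) ∧ χ p + χ (f i p) = 1 := by
  classical
  set H := Subgroup.closure (f '' ↑((Finset.range r).erase i))
  have hmem : ∀ j < r, j ≠ i → ∀ x, f j x ∈ MulAction.orbit H x := fun j hj hji x =>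
    ⟨⟨f j, Subgroup.subset_closure ⟨j, by simp [hj, hji], rfl⟩⟩, rfl⟩
  obtain ⟨p, hp⟩ : ∃ p, f i p ∉ MulAction.orbit H p := by
    by_contra! hall
    refine h.not_isPretransitive_erase hr hα hi hir <|
      isPretransitive_of_forall_apply_mem_orbit (h.isPretransitive hα) ?_
    rintro _ ⟨j, hj, rfl⟩
    by_cases hji : j = i
    · subst hji; exact hall
    · exact hmem j (by simpa using hj) hji
  refine ⟨p, (MulAction.orbit H p).indicator 1, fun j hj hji x => ?_, ?_⟩
  · have hiff : f j x ∈ MulAction.orbit H p ↔ x ∈ MulAction.orbit H p := by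
      rw [← MulAction.orbit_eq_iff, ← MulAction.orbit_eq_iff,
        MulAction.orbit_eq_iff.mpr (hmem j hj hji x)]
    simp only [Set.indicator_apply, hiff, Pi.one_apply]
  · rw [Set.indicator_of_mem (MulAction.mem_orbit_self p), Set.indicator_of_notMem hp, add_zero,
      Pi.one_apply]

theorem exists_hasSeparatedEdges (h : IsString (Finset.range r) f) (hr : 6 ≤ r)
    (hα : Nat.card α = r + 1) : ∃ a, HasSeparatedEdges r f a := by
  have hmem : ∀ {j}, j < r → j ∈ Finset.range r := Finset.mem_range.mpr
  have : Nonempty α := Finite.card_pos_iff.mp (by omega)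
  choose! b χ hχ hχ' using fun (i : ℕ) (hi : 0 < i ∧ i + 1 < r) =>
    h.exists_invariant_function hr hα hi.1 hi.2
  obtain ⟨p, q, hp, hq, hne⟩ := exists_moved_pair_ne (h.mul_self 0 (hmem (by omega)))
    (h.mul_self (r - 1) (hmem (by omega))) (h.ne_one (hmem (by omega)))
    (h.ne_one (hmem (by omega))) (h.ne (hmem (by omega)) (hmem (by omega)) (by omega))
  obtain ⟨a, ha0, hal, ha⟩ : ∃ a : ℕ → α, a 0 = p ∧ a (r - 1) = q ∧
      ∀ i, 0 < i ∧ i + 1 < r → a i = b i :=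
    ⟨fun i => if i = 0 then p else if i = r - 1 then q else b i, by simp,
      by simp [show r - 1 ≠ 0 by omega],
      fun i hi => by simp [show i ≠ 0 by omega, show i ≠ r - 1 by omega]⟩
  refine ⟨a, hasSeparatedEdges_of_edge_ne (by omega) (by rwa [ha0]) (by rwa [hal])
    (by rwa [edge, edge, ha0, hal]) fun l hl hl' => ⟨χ l, hχ l ⟨hl, hl'⟩, funext fun j => ?_⟩⟩
  rw [coboundary_apply]
  by_cases hjl : j = l
  · rw [hjl, ha l ⟨hl, hl'⟩, hχ' l ⟨hl, hl'⟩, Pi.single_eq_same]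
  · rw [hχ l ⟨hl, hl'⟩ j j.2 (Fin.val_ne_of_ne hjl), CharTwo.add_self_eq_zero,
      Pi.single_eq_of_ne hjl]

end IsString

end FrameExistence

/-! ### Frames and extra moves -/

section EdgeSwap

variable {α : Type*} [DecidableEq α] {i j : ℕ} {f : ℕ → Perm α} {a : ℕ → α} {x : α}

/-- The transposition exchanging the endpoints of a marked edge. -/
def edgeSwap (f : ℕ → Perm α) (a : ℕ → α) (j : ℕ) : Perm α := Equiv.swap (a j) (f j (a j))

theorem edgeSwap_apply_of_notMem (hx : x ∉ edge f a j) : edgeSwap f a j x = x := by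
  simp only [edge, Set.mem_insert_iff, Set.mem_singleton_iff, not_or] at hx
  exact Equiv.swap_apply_of_ne_of_ne hx.1 hx.2

theorem commute_edgeSwap (hij : Disjoint (edge f a i) (edge f a j)) :
    Commute (edgeSwap f a i) (edgeSwap f a j) :=
  Equiv.Perm.Disjoint.commute fun x => by
    by_cases hx : x ∈ edge f a i
    · exact Or.inr (edgeSwap_apply_of_notMem (Set.disjoint_left.mp hij hx))
    · exact Or.inl (edgeSwap_apply_of_notMem hx)

end EdgeSwap

section Frame

variable {α : Type*} {r i j : ℕ} {f : ℕ → Perm α} {a : ℕ → α} {x y : α}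

/-- A string of involutions with one marked edge each, such that the marked edges are distinct,
form a connected graph, and carry all moved points except for some on the two outer edges. -/
structure Frame (r : ℕ) (f : ℕ → Perm α) (a : ℕ → α) : Prop where
  six_le : 6 ≤ r
  string : IsString (Finset.range r) f
  marked_ne : ∀ j < r, f j (a j) ≠ a j
  edge_ne : ∀ i < r, ∀ j < r, i ≠ j → edge f a i ≠ edge f a j
  connected : ∀ W : Set α, W.Nonempty → (∀ j < r, a j ∈ W ↔ f j (a j) ∈ W) → W = Set.univ
  fixed : ∀ j < r, ∀ x ∉ edge f a j, x ∉ edge f a 0 → x ∉ edge f a (r - 1) → f j x = x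

theorem HasSeparatedEdges.frame [Finite α] (h : HasSeparatedEdges r f a)
    (hf : IsString (Finset.range r) f) (hr : 6 ≤ r) (hα : Nat.card α = r + 1) : Frame r f a where
  six_le := hr
  string := hf
  marked_ne _ := h.apply_ne_self
  edge_ne _ hi _ hj := h.edge_ne hi hj
  connected _ := h.eq_univ_of_forall_mem_iff hα
  fixed _ hj _ := h.apply_eq_self_of_notMem hα hj

namespace Frame

theorem rev (h : Frame r f a) : Frame r (fun j => f (r - 1 - j)) (fun j => a (r - 1 - j)) := by
  have hr := h.six_le
  refine ⟨hr, ⟨fun _ _ => ?_, fun i hi j hj hij => ?_, fun i hi => ?_⟩, fun j hj => ?_,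
    fun i hi j hj hij => ?_, fun W hne hW => ?_, fun j hj x hxj hx0 hxl => ?_⟩
  · exact h.string.mul_self _ (Finset.mem_range.mpr (by omega))
  · rw [Finset.mem_range] at hi hj
    exact h.string.commute_of_add_one_lt (by omega) (by omega) (by omega)
  · rw [Finset.mem_range] at hi
    rw [← Set.image_image]
    refine h.string.notMem_closure (Finset.mem_range.mpr (by omega)) ?_
    rintro _ ⟨j, hj, rfl⟩
    obtain ⟨hji, hj⟩ := Finset.mem_erase.mp hj
    rw [Finset.mem_range] at hj ⊢
    omega
  · exact h.marked_ne _ (by omega)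
  · exact h.edge_ne _ (by omega) _ (by omega) (by omega)
  · refine h.connected W hne fun j hj => ?_
    simpa only [Nat.sub_sub_self (show j ≤ r - 1 by omega)] using hW (r - 1 - j) (by omega)
  · have hx0' : x ∉ edge f a 0 := by simpa only [edge, Nat.sub_self] using hxl
    exact h.fixed _ (by omega) x hxj hx0' hx0

theorem apply_apply (h : Frame r f a) (hj : j < r) (x : α) : f j (f j x) = x :=
  apply_apply_of_mul_self (h.string.mul_self j (Finset.mem_range.mpr hj)) x

theorem apply_comm (h : Frame r f a) (hi : i < r) (hj : j < r) (hij : i + 1 < j ∨ j + 1 < i)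
    (x : α) : f i (f j x) = f j (f i x) :=
  congrArg (fun g : Perm α => g x) (h.string.commute_of_add_one_lt hi hj (by omega)).eq

theorem edge_eq_pair (h : Frame r f a) (hj : j < r) (hx : x ∈ edge f a j) :
    edge f a j = {x, f j x} := by
  rcases hx with rfl | rfl
  · rfl
  · rw [h.apply_apply hj, Set.pair_comm, edge]

theorem eq_or_eq_of_mem_edge (h : Frame r f a) (hj : j < r) (hx : x ∈ edge f a j)
    (hy : y ∈ edge f a j) : y = x ∨ y = f j x := by
  rwa [h.edge_eq_pair hj hx] at hy

theorem apply_mem_edge (h : Frame r f a) (hj : j < r) (hx : x ∈ edge f a j) :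
    f j x ∈ edge f a j := by
  rw [h.edge_eq_pair hj hx]
  exact Set.mem_insert_of_mem _ rfl

theorem apply_notMem_edge (h : Frame r f a) (hj : j < r) (hx : x ∉ edge f a j) :
    f j x ∉ edge f a j := fun hx' => hx (h.apply_apply hj x ▸ h.apply_mem_edge hj hx')

theorem apply_ne_self (h : Frame r f a) (hj : j < r) (hx : x ∈ edge f a j) : f j x ≠ x := by
  rcases hx with rfl | rfl
  · exact h.marked_ne j hj
  · exact (f j).injective.ne (h.marked_ne j hj)

theorem apply_notMem_edge_of_mem (h : Frame r f a) (hi : i < r) (hj : j < r) (hij : i ≠ j)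
    (hxi : x ∈ edge f a i) (hxj : x ∈ edge f a j) : f j x ∉ edge f a i := fun hx => by
  refine h.edge_ne i hi j hj hij ?_
  have hx' := (h.eq_or_eq_of_mem_edge hi hxi hx).resolve_left (h.apply_ne_self hj hxj)
  rw [h.edge_eq_pair hi hxi, h.edge_eq_pair hj hxj, hx']

theorem exists_mem_edge_apply_notMem (h : Frame r f a) {W : Set α} (hW : W.Nonempty)
    (hne : W ≠ Set.univ) : ∃ j < r, ∃ x ∈ edge f a j, x ∈ W ∧ f j x ∉ W := by
  by_contra! hall
  refine hne (h.connected W hW fun j hj => ⟨hall j hj _ (Or.inl rfl), fun hx => ?_⟩)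
  exact h.apply_apply hj (a j) ▸ hall j hj _ (Or.inr rfl) hx

theorem disjoint_outer (h : Frame r f a) (hx : x ∈ edge f a 0) : x ∉ edge f a (r - 1) := by
  have hr := h.six_le
  intro hxl
  have h0l := h.apply_notMem_edge_of_mem (by omega) (by omega) (by omega) hx hxl
  have hl0 := h.apply_notMem_edge_of_mem (by omega) (by omega) (by omega) hxl hx
  have hcomm := h.apply_comm (i := 0) (j := r - 1) (by omega) (by omega) (by omega) x
  have hfix := h.fixed 0 (by omega) _ (h.apply_notMem_edge (by omega) h0l)
    (h.apply_notMem_edge (by omega) h0l) (hcomm ▸ h.apply_notMem_edge (by omega) hl0)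
  rw [h.apply_apply (by omega), hcomm] at hfix
  exact h.apply_ne_self (by omega) hx ((f (r - 1)).injective hfix.symm)

end Frame

end Frame

namespace Frame

variable {α : Type*} {r i j : ℕ} {f : ℕ → Perm α} {a : ℕ → α} {x u : α}

section EdgeSwap

variable [DecidableEq α]

theorem edgeSwap_eq_swap (h : Frame r f a) (hj : j < r) (hx : x ∈ edge f a j) :
    edgeSwap f a j = Equiv.swap x (f j x) := by
  rcases hx with rfl | rfl
  · rfl
  · rw [h.apply_apply hj, Equiv.swap_comm, edgeSwap]

theorem edgeSwap_apply_of_mem (h : Frame r f a) (hj : j < r) (hx : x ∈ edge f a j) :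
    edgeSwap f a j x = f j x := by
  rw [h.edgeSwap_eq_swap hj hx, Equiv.swap_apply_left]

theorem eq_edgeSwap_iff (h : Frame r f a) (hj : j < r) :
    f j = edgeSwap f a j ↔ ∀ x ∉ edge f a j, f j x = x := by
  refine ⟨fun he x hx => he ▸ edgeSwap_apply_of_notMem hx, fun hfix => Equiv.ext fun x => ?_⟩
  by_cases hx : x ∈ edge f a j
  · rw [h.edgeSwap_apply_of_mem hj hx]
  · rw [hfix x hx, edgeSwap_apply_of_notMem hx]

end EdgeSwap

theorem zero_apply_eq_last_apply (h : Frame r f a) (hx0 : x ∉ edge f a 0) (hx : f 0 x ≠ x) :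
    x ∈ edge f a (r - 1) ∧ f 0 x = f (r - 1) x := by
  have hr := h.six_le
  have hmem : ∀ y ∉ edge f a 0, f 0 y ≠ y → y ∈ edge f a (r - 1) := fun y hy0 hy => by
    by_contra hyl
    exact hy (h.fixed 0 (by omega) y hy0 hy0 hyl)
  have hxl := hmem x hx0 hx
  refine ⟨hxl, (h.eq_or_eq_of_mem_edge (by omega) hxl (hmem _ ?_ ?_)).resolve_left hx⟩
  · exact h.apply_notMem_edge (by omega) hx0
  · exact (f 0).injective.ne hx

theorem last_apply_eq_zero_apply (h : Frame r f a) (hxl : x ∉ edge f a (r - 1))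
    (hx : f (r - 1) x ≠ x) : x ∈ edge f a 0 ∧ f (r - 1) x = f 0 x := by
  simpa only [edge, Nat.sub_self, Nat.sub_zero] using h.rev.zero_apply_eq_last_apply hxl hx

theorem apply_eq_of_mem_edge (h : Frame r f a) (hi : i < r) (hj : j < r) (hij : f j x = f i x)
    (hx : x ∈ edge f a i) (hu : u ∈ edge f a i) : f j u = f i u := by
  rcases h.eq_or_eq_of_mem_edge hi hx hu with rfl | rfl
  · exact hij
  · rw [h.apply_apply hi, ← hij, h.apply_apply hj]

theorem zero_eq_edgeSwap_or_last_eq_edgeSwap [DecidableEq α] (h : Frame r f a) :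
    f 0 = edgeSwap f a 0 ∨ f (r - 1) = edgeSwap f a (r - 1) := by
  have hr := h.six_le
  have h0 : 0 < r := by omega
  have hl : r - 1 < r := by omega
  rw [h.eq_edgeSwap_iff h0, h.eq_edgeSwap_iff hl]
  by_contra! hmoved
  obtain ⟨⟨x, hx0, hx⟩, y, hyl, hy⟩ := hmoved
  obtain ⟨hxl, hx⟩ := h.zero_apply_eq_last_apply hx0 hx
  obtain ⟨hy0, hy⟩ := h.last_apply_eq_zero_apply hyl hy
  refine h.string.ne (Finset.mem_range.mpr h0) (Finset.mem_range.mpr hl) (by omega)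
    (Equiv.ext fun z => ?_)
  by_cases hz0 : z ∈ edge f a 0
  · exact (h.apply_eq_of_mem_edge h0 hl hy hy0 hz0).symm
  by_cases hzl : z ∈ edge f a (r - 1)
  · exact h.apply_eq_of_mem_edge hl h0 hx hxl hzl
  · rw [h.fixed 0 h0 z hz0 hz0 hzl, h.fixed _ hl z hzl hz0 hzl]

theorem apply_mem_edge_of_comm (h : Frame r f a) (hfix : ∀ x ∉ edge f a i, f i x = x) (hi : i < r)
    (hj : j < r) (hij : i + 1 < j ∨ j + 1 < i) (hx : x ∈ edge f a i) : f j x ∈ edge f a i := by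
  by_contra hjx
  have hcomm := h.apply_comm hi hj hij x
  rw [hfix _ hjx] at hcomm
  exact h.apply_ne_self hi hx ((f j).injective hcomm.symm)

theorem exists_mem_edge_one_apply_notMem (h : Frame r f a)
    (h0 : ∀ x ∉ edge f a 0, f 0 x = x) : ∃ x ∈ edge f a 0, x ∈ edge f a 1 ∧ f 1 x ∉ edge f a 0 := by
  have hr := h.six_le
  obtain ⟨j, hj, x, hxj, hx0, hjx⟩ := h.exists_mem_edge_apply_notMem (W := edge f a 0)
    ⟨a 0, Or.inl rfl⟩ fun huniv => h.disjoint_outer (huniv ▸ Set.mem_univ (a (r - 1))) (Or.inl rfl)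
  have hj0 : j ≠ 0 := by
    rintro rfl
    exact hjx (h.apply_mem_edge hj hx0)
  obtain rfl : j = 1 := by
    by_contra hj1
    exact hjx (h.apply_mem_edge_of_comm h0 (by omega) hj (by omega) hx0)
  exact ⟨x, hx0, hxj, hjx⟩

theorem last_eq_zero_mul_edgeSwap [DecidableEq α] (h : Frame r f a)
    (h0 : ∀ x ∉ edge f a 0, f 0 x = x) (hl0 : ∀ x ∈ edge f a 0, f (r - 1) x = f 0 x) :
    f (r - 1) = f 0 * edgeSwap f a (r - 1) := by
  have hr := h.six_le
  refine Equiv.ext fun x => ?_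
  rw [Equiv.Perm.mul_apply]
  by_cases hxl : x ∈ edge f a (r - 1)
  · rw [h.edgeSwap_apply_of_mem (by omega) hxl,
      h0 _ fun hx0 => h.disjoint_outer hx0 (h.apply_mem_edge (by omega) hxl)]
  rw [edgeSwap_apply_of_notMem hxl]
  by_cases hx0 : x ∈ edge f a 0
  · exact hl0 x hx0
  · rw [h.fixed _ (by omega) x hxl hx0 hxl, h0 x hx0]

theorem last_eq_edgeSwap [DecidableEq α] (h : Frame r f a) (h0 : f 0 = edgeSwap f a 0) :
    f (r - 1) = edgeSwap f a (r - 1) := by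
  have hr := h.six_le
  have hl : r - 1 < r := by omega
  have h0fix := (h.eq_edgeSwap_iff (by omega)).mp h0
  rw [h.eq_edgeSwap_iff hl]
  by_contra! hmoved
  obtain ⟨y, hyl, hy⟩ := hmoved
  obtain ⟨hy0, hy⟩ := h.last_apply_eq_zero_apply hyl hy
  have hl0 : ∀ z ∈ edge f a 0, f (r - 1) z = f 0 z := fun z =>
    h.apply_eq_of_mem_edge (by omega) hl hy hy0
  obtain ⟨u, hu0, -, hu⟩ := h.exists_mem_edge_one_apply_notMem h0fix
  have hcomm : f (r - 1) (f 1 u) = f 1 (f 0 u) := by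
    rw [h.apply_comm hl (by omega) (by omega), hl0 u hu0]
  have hul : f 1 u ∈ edge f a (r - 1) := by
    by_contra hul
    refine hu (h.last_apply_eq_zero_apply hul ?_).1
    rw [hcomm]
    exact (f 1).injective.ne (h.apply_ne_self (by omega) hu0)
  have hconj : edgeSwap f a (r - 1) = f 1 * f 0 * (f 1)⁻¹ := by
    rw [h.edgeSwap_eq_swap hl hul, hcomm, Equiv.swap_apply_apply,
      ← h.edgeSwap_eq_swap (by omega) hu0, ← h0]
  have hlast := h.last_eq_zero_mul_edgeSwap h0fix hl0
  refine h.string.notMem_closure (Finset.mem_range.mpr hl) (A := {0, 1}) ?_ ?_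
  · rintro _ (rfl | rfl) <;> exact ⟨Finset.mem_range.mpr (by omega), by omega⟩
  · have hmem : ∀ j ∈ ({0, 1} : Set ℕ), f j ∈ Subgroup.closure (f '' {0, 1}) := fun j hj =>
      Subgroup.subset_closure (Set.mem_image_of_mem f hj)
    rw [hlast, hconj]
    exact mul_mem (hmem 0 (by simp)) (mul_mem (mul_mem (hmem 1 (by simp)) (hmem 0 (by simp)))
      (inv_mem (hmem 1 (by simp))))

theorem outer_eq_edgeSwap [DecidableEq α] (h : Frame r f a) :
    f 0 = edgeSwap f a 0 ∧ f (r - 1) = edgeSwap f a (r - 1) := by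
  rcases h.zero_eq_edgeSwap_or_last_eq_edgeSwap with h0 | hl
  · exact ⟨h0, h.last_eq_edgeSwap h0⟩
  · exact ⟨by simpa only [edgeSwap, Nat.sub_self] using h.rev.last_eq_edgeSwap hl, hl⟩

theorem zero_apply (h : Frame r f a) (hx : x ∉ edge f a 0) : f 0 x = x := by
  classical
  have hr := h.six_le
  exact (h.eq_edgeSwap_iff (by omega)).mp h.outer_eq_edgeSwap.1 x hx

theorem last_apply (h : Frame r f a) (hx : x ∉ edge f a (r - 1)) : f (r - 1) x = x :=
  h.rev.zero_apply hx

theorem apply_mem_edge_zero (h : Frame r f a) (hj : j < r) (hj1 : j ≠ 1) (hx : x ∈ edge f a 0) :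
    f j x ∈ edge f a 0 := by
  rcases eq_or_ne j 0 with rfl | hj0
  · exact h.apply_mem_edge hj hx
  · exact h.apply_mem_edge_of_comm (fun _ => h.zero_apply) (by omega) hj (by omega) hx

theorem apply_eq_zero_apply (h : Frame r f a) (hj : j < r) (hx0 : x ∈ edge f a 0)
    (hxj : x ∉ edge f a j) (hx : f j x ≠ x) : f j x = f 0 x := by
  have hr := h.six_le
  suffices hmem : f j x ∈ edge f a 0 from
    (h.eq_or_eq_of_mem_edge (by omega) hx0 hmem).resolve_left hx
  rcases eq_or_ne j 1 with rfl | hj1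
  · by_contra hmem
    have hlast : f 1 x ∈ edge f a (r - 1) := by
      by_contra hlast
      have hfix := h.fixed 1 hj _ (h.apply_notMem_edge hj hxj) hmem hlast
      exact hx ((f 1).injective hfix)
    refine h.disjoint_outer hx0 ?_
    rw [← h.apply_apply hj x]
    exact h.apply_mem_edge_of_comm (fun _ => h.last_apply) (by omega) hj (by omega) hlast
  · exact h.apply_mem_edge_zero hj hj1 hx0

theorem exists_mem_edge_one_apply_eq_self (h : Frame r f a) :
    ∃ x ∈ edge f a 0, x ∈ edge f a 1 ∧ f 1 (f 0 x) = f 0 x := by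
  have hr := h.six_le
  obtain ⟨x, hx0, hx1, hx⟩ := h.exists_mem_edge_one_apply_notMem fun _ => h.zero_apply
  refine ⟨x, hx0, hx1, ?_⟩
  have hy0 := h.apply_mem_edge (j := 0) (by omega) hx0
  have hy1 := h.apply_notMem_edge_of_mem (by omega) (by omega) one_ne_zero hx1 hx0
  by_contra hy
  have hy' := h.apply_eq_zero_apply (by omega) hy0 hy1 hy
  rw [h.apply_apply (by omega)] at hy'
  refine hx ?_
  rwa [← hy', h.apply_apply (by omega)]

theorem apply_eq_self_of_mem_edge_zero (h : Frame r f a) (hj3 : 3 ≤ j) (hj : j < r)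
    (hx : x ∈ edge f a 0) : f j x = x := by
  obtain ⟨y, hy0, hy1, hy⟩ := h.exists_mem_edge_one_apply_eq_self
  have hjy : f j y = y := by
    refine (h.eq_or_eq_of_mem_edge (by omega) hy0
      (h.apply_mem_edge_zero hj (by omega) hy0)).resolve_right fun hjy => ?_
    have hcomm := h.apply_comm (i := 1) (by omega) hj (by omega) y
    rw [hjy, hy, ← hjy] at hcomm
    exact h.apply_ne_self (by omega) hy1 ((f j).injective hcomm.symm)
  rcases h.eq_or_eq_of_mem_edge (by omega) hy0 hx with rfl | rfl
  · exact hjy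
  · rw [h.apply_comm hj (by omega) (by omega), hjy]

theorem eq_two_of_mem_edge_zero (h : Frame r f a) (hj : j < r) (hx0 : x ∈ edge f a 0)
    (hxj : x ∉ edge f a j) (hx : f j x ≠ x) : j = 2 := by
  have hj3 : j < 3 := by
    by_contra! hj3
    exact hx (h.apply_eq_self_of_mem_edge_zero hj3 hj hx0)
  have hj0 : j ≠ 0 := by
    rintro rfl
    exact hxj hx0
  have hj1 : j ≠ 1 := by
    rintro rfl
    obtain ⟨y, hy0, hy1, hy⟩ := h.exists_mem_edge_one_apply_eq_self
    rcases h.eq_or_eq_of_mem_edge (by omega) hy0 hx0 with rfl | rfl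
    · exact hxj hy1
    · exact hx hy
  omega

theorem eq_two_or_eq_sub_three (h : Frame r f a) (hj : j < r) (hxj : x ∉ edge f a j)
    (hx : f j x ≠ x) : x ∈ edge f a 0 ∧ j = 2 ∨ x ∈ edge f a (r - 1) ∧ j = r - 3 := by
  have hr := h.six_le
  by_cases hx0 : x ∈ edge f a 0
  · exact Or.inl ⟨hx0, h.eq_two_of_mem_edge_zero hj hx0 hxj hx⟩
  by_cases hxl : x ∈ edge f a (r - 1)
  · have hj' : r - 1 - (r - 1 - j) = j := by omega
    have := h.rev.eq_two_of_mem_edge_zero (j := r - 1 - j) (by omega) hxl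
      (by simpa only [edge, hj'] using hxj) (by simpa only [hj'] using hx)
    exact Or.inr ⟨hxl, by omega⟩
  · exact absurd (h.fixed j hj x hxj hx0 hxl) hx

end Frame

/-! ### Edges form a path -/

namespace Frame

variable {α : Type*} {r i j : ℕ} {f : ℕ → Perm α} {a : ℕ → α} {x : α}

theorem two_apply_apply_eq_self (h : Frame r f a) (hj : j < r) (hj2 : 2 + 1 < j ∨ j + 1 < 2)
    (hx2 : x ∈ edge f a 2) (hxj : x ∈ edge f a j) (h0 : f j x ∈ edge f a 0) :
    f 2 (f j x) = f j x := by
  have hr := h.six_le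
  by_contra hmoved
  have hjx2 := h.apply_notMem_edge_of_mem (by omega) hj (by omega) hx2 hxj
  obtain rfl : j = 0 := by
    by_contra hj0
    have hfix := h.apply_eq_self_of_mem_edge_zero (by omega) hj h0
    exact h.apply_ne_self hj hxj ((f j).injective hfix)
  refine h.apply_notMem_edge (by omega) hjx2 ?_
  rwa [h.apply_eq_zero_apply (by omega) h0 hjx2 hmoved, h.apply_apply hj]

theorem apply_apply_eq_self (h : Frame r f a) (hi : i < r) (hj : j < r)
    (hij : i + 1 < j ∨ j + 1 < i) (hxi : x ∈ edge f a i) (hxj : x ∈ edge f a j) :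
    f i (f j x) = f j x := by
  have hr := h.six_le
  by_contra hmoved
  have hjx := h.apply_notMem_edge_of_mem hi hj (by omega) hxi hxj
  rcases h.eq_two_or_eq_sub_three hi hjx hmoved with ⟨h0, rfl⟩ | ⟨hl, rfl⟩
  · exact hmoved (h.two_apply_apply_eq_self hj hij hxi hxj h0)
  · have hj' : r - 1 - (r - 1 - j) = j := by omega
    have := h.rev.two_apply_apply_eq_self (j := r - 1 - j) (x := x) (by omega) (by omega) hxi
    simp only [edge, hj'] at this
    exact hmoved (this hxj hl)

theorem disjoint_edge (h : Frame r f a) (hi : i < r) (hj : j < r) (hij : i + 1 < j ∨ j + 1 < i) :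
    Disjoint (edge f a i) (edge f a j) := by
  refine Set.disjoint_left.mpr fun x hxi hxj => ?_
  refine h.apply_notMem_edge_of_mem hi hj (by omega) hxi hxj ?_
  rw [← h.apply_apply_eq_self hi hj hij hxi hxj, h.apply_comm hi hj hij,
    h.apply_apply_eq_self hj hi hij.symm hxj hxi]
  exact h.apply_mem_edge hi hxi

theorem exists_mem_edge_succ (h : Frame r f a) (hj : j + 1 < r) :
    ∃ x ∈ edge f a j, x ∈ edge f a (j + 1) := by
  by_contra! hdisj
  obtain ⟨k, hk, x, hxk, ⟨i, hij, hxi⟩, hkx⟩ := h.exists_mem_edge_apply_notMem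
    (W := {x | ∃ i ≤ j, x ∈ edge f a i}) ⟨a j, j, le_rfl, Or.inl rfl⟩ fun huniv => by
      obtain ⟨i, hij, hi⟩ : a (j + 1) ∈ {x | ∃ i ≤ j, x ∈ edge f a i} := huniv ▸ Set.mem_univ _
      rcases hij.eq_or_lt with rfl | hij
      · exact hdisj _ hi (Or.inl rfl)
      · exact Set.disjoint_left.mp (h.disjoint_edge (by omega) hj (by omega)) hi (Or.inl rfl)
  have hjk : j < k := by
    by_contra! hkj
    exact hkx ⟨k, hkj, h.apply_mem_edge hk hxk⟩
  by_cases hik : i + 1 < k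
  · exact Set.disjoint_left.mp (h.disjoint_edge (by omega) hk (Or.inl hik)) hxi hxk
  · obtain rfl : i = j := by omega
    obtain rfl : k = i + 1 := by omega
    exact hdisj x hxi hxk

section EdgeSwap

variable [DecidableEq α]

theorem edgeSwap_mul_edgeSwap_pow_three (h : Frame r f a) (hj : j + 1 < r) :
    (edgeSwap f a j * edgeSwap f a (j + 1)) ^ 3 = 1 := by
  obtain ⟨x, hxj, hxj'⟩ := h.exists_mem_edge_succ hj
  have hx := h.apply_ne_self (by omega) hxj
  have hx' := h.apply_ne_self hj hxj'
  have hne : f j x ≠ f (j + 1) x := fun he =>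
    h.apply_notMem_edge_of_mem (by omega) hj (by omega) hxj hxj'
      (he ▸ h.apply_mem_edge (by omega) hxj)
  rw [h.edgeSwap_eq_swap (by omega) hxj, h.edgeSwap_eq_swap hj hxj']
  generalize f j x = y, f (j + 1) x = z at *
  calc (Equiv.swap x y * Equiv.swap x z) ^ 3
      = (Equiv.swap x y * Equiv.swap z x * Equiv.swap x y) *
        (Equiv.swap x z * Equiv.swap y x * Equiv.swap x z) := by
        rw [Equiv.swap_comm z x, Equiv.swap_comm y x]
        simp only [pow_succ, pow_zero, one_mul, mul_assoc]
    _ = Equiv.swap y z * Equiv.swap z y := by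
        rw [Equiv.swap_mul_swap_mul_swap hx' hne.symm, Equiv.swap_mul_swap_mul_swap hx hne]
    _ = 1 := by rw [Equiv.swap_comm z y, Equiv.swap_mul_self]

theorem two_eq_of_mem_edge_zero (h : Frame r f a) (hx0 : x ∈ edge f a 0) (hx2 : x ∉ edge f a 2)
    (hx : f 2 x ≠ x) : f 2 = edgeSwap f a 2 * f 0 ∧ Disjoint (edge f a 2) (edge f a 0) := by
  have hr := h.six_le
  have h20 := h.apply_eq_zero_apply (by omega) hx0 hx2 hx
  have hdisj : ∀ y ∈ edge f a 0, y ∉ edge f a 2 := fun y hy0 => by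
    rcases h.eq_or_eq_of_mem_edge (by omega) hx0 hy0 with rfl | rfl
    · exact hx2
    · exact h20 ▸ h.apply_notMem_edge (by omega) hx2
  refine ⟨Equiv.ext fun y => ?_, Set.disjoint_right.mpr hdisj⟩
  rw [Equiv.Perm.mul_apply]
  by_cases hy0 : y ∈ edge f a 0
  · rw [edgeSwap_apply_of_notMem (hdisj _ (h.apply_mem_edge (by omega) hy0)),
      h.apply_eq_of_mem_edge (by omega) (by omega) h20 hx0 hy0]
  rw [h.zero_apply hy0]
  by_cases hy2 : y ∈ edge f a 2
  · rw [h.edgeSwap_apply_of_mem (by omega) hy2]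
  rw [edgeSwap_apply_of_notMem hy2]
  by_contra hy
  rcases h.eq_two_or_eq_sub_three (by omega) hy2 hy with ⟨hy0', -⟩ | ⟨-, hr3⟩
  · exact hy0 hy0'
  · omega

theorem exists_three_eq_edgeSwap_mul (h : Frame r f a) :
    ∃ e, (e = 1 ∨ e = f (r - 1)) ∧ f 3 = edgeSwap f a 3 * e ∧ Commute (edgeSwap f a 3) e := by
  have hr := h.six_le
  by_cases h3 : f 3 = edgeSwap f a 3
  · exact ⟨1, Or.inl rfl, by rw [h3, mul_one], Commute.one_right _⟩
  rw [h.eq_edgeSwap_iff (by omega)] at h3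
  push Not at h3
  obtain ⟨x, hx3, hx⟩ := h3
  obtain ⟨-, h32⟩ | ⟨hxl, hr3⟩ := h.eq_two_or_eq_sub_three (by omega) hx3 hx
  · omega
  have hr2 : r - 1 - 2 = 3 := by omega
  have hrev := h.rev.two_eq_of_mem_edge_zero (x := x) hxl
  simp only [edgeSwap, edge, hr2] at hrev
  obtain ⟨h3, hdisj⟩ := hrev hx3 hx
  refine ⟨f (r - 1), Or.inr rfl, h3, ?_⟩
  rw [h.outer_eq_edgeSwap.2]
  exact commute_edgeSwap hdisj

theorem commute_edgeSwap_of_lt (h : Frame r f a) (hi : i < r) (hj : j < r)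
    (hij : i + 1 < j ∨ j + 1 < i) : Commute (edgeSwap f a i) (edgeSwap f a j) :=
  commute_edgeSwap (h.disjoint_edge hi hj hij)

theorem exists_two_mul_three_pow_three (h : Frame r f a) (h2 : f 2 = edgeSwap f a 2 * f 0)
    (h20 : Commute (edgeSwap f a 2) (f 0)) :
    ∃ e, (e = 1 ∨ e = f (r - 1)) ∧ (f 2 * f 3) ^ 3 = f 0 * e := by
  have hr := h.six_le
  have hself : ∀ j < r, f j * f j = 1 := fun j hj =>
    h.string.mul_self j (Finset.mem_range.mpr hj)
  obtain ⟨h0, hl⟩ := h.outer_eq_edgeSwap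
  obtain ⟨e, he, h3, he3⟩ := h.exists_three_eq_edgeSwap_mul
  have h30 : Commute (edgeSwap f a 3) (f 0) :=
    h0 ▸ h.commute_edgeSwap_of_lt (by omega) (by omega) (by omega)
  obtain ⟨he0, he2, hee⟩ : Commute (f 0) e ∧ Commute (edgeSwap f a 2) e ∧ e * e = 1 := by
    rcases he with rfl | rfl
    · exact ⟨Commute.one_right _, Commute.one_right _, one_mul 1⟩
    · exact ⟨h.string.commute_of_add_one_lt (by omega) (by omega) (by omega),
        hl ▸ h.commute_edgeSwap_of_lt (by omega) (by omega) (by omega), hself _ (by omega)⟩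
  refine ⟨e, he, ?_⟩
  calc (f 2 * f 3) ^ 3
      = (edgeSwap f a 2 * edgeSwap f a 3 * (f 0 * e)) ^ 3 := by
        rw [h2, h3, h30.symm.mul_mul_mul_comm]
    _ = (f 0 * e) ^ 3 := by
        rw [((h20.mul_right he2).mul_left (h30.mul_right he3)).mul_pow,
          h.edgeSwap_mul_edgeSwap_pow_three (by omega), one_mul]
    _ = f 0 * f 0 * f 0 * (e * e * e) := by
        rw [he0.mul_pow, pow_succ, pow_succ e, pow_two, pow_two]
    _ = f 0 * e := by rw [hself 0 (by omega), hee, one_mul, one_mul]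

end EdgeSwap

theorem two_apply_eq_self (h : Frame r f a) (hx0 : x ∈ edge f a 0) (hx2 : x ∉ edge f a 2) :
    f 2 x = x := by
  classical
  have hr := h.six_le
  by_contra hx
  obtain ⟨h2, hdisj⟩ := h.two_eq_of_mem_edge_zero hx0 hx2 hx
  have h20 : Commute (edgeSwap f a 2) (f 0) := by
    rw [h.outer_eq_edgeSwap.1]
    exact commute_edgeSwap hdisj
  obtain ⟨e, he, hcube⟩ := h.exists_two_mul_three_pow_three h2 h20
  refine h.string.notMem_closure (Finset.mem_range.mpr (by omega)) (i := 0) (A := {2, 3, r - 1})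
    ?_ ?_
  · rintro _ (rfl | rfl | rfl) <;> exact ⟨Finset.mem_range.mpr (by omega), by omega⟩
  · have hmem : ∀ j ∈ ({2, 3, r - 1} : Set ℕ), f j ∈ Subgroup.closure (f '' {2, 3, r - 1}) :=
      fun j hj => Subgroup.subset_closure (Set.mem_image_of_mem f hj)
    have hmem_cube : f 0 * e ∈ Subgroup.closure (f '' {2, 3, r - 1}) :=
      hcube ▸ pow_mem (mul_mem (hmem 2 (by simp)) (hmem 3 (by simp))) 3
    refine (Subgroup.mul_mem_cancel_right _ ?_).mp hmem_cube
    rcases he with rfl | rfl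
    · exact one_mem _
    · exact hmem (r - 1) (by simp)

theorem eq_edgeSwap [DecidableEq α] (h : Frame r f a) (hj : j < r) : f j = edgeSwap f a j := by
  refine (h.eq_edgeSwap_iff hj).mpr fun x hxj => ?_
  by_contra hx
  rcases h.eq_two_or_eq_sub_three hj hxj hx with ⟨hx0, rfl⟩ | ⟨hxl, rfl⟩
  · exact hx (h.two_apply_eq_self hx0 hxj)
  · exact hx (h.rev.two_apply_eq_self hxl hxj)

end Frame

section Walk

variable {α : Type*} {r : ℕ} {f : ℕ → Perm α} {a : ℕ → α}

/-- The walk that starts at a given point and applies the permutations `f 0, f 1, f 2, …` in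
turn. -/
def walk (f : ℕ → Perm α) (x : α) : ℕ → α
  | 0 => x
  | j + 1 => f j (walk f x j)

namespace Frame

theorem exists_walk_mem_edge (h : Frame r f a) : ∃ x, ∀ j < r, walk f x j ∈ edge f a j := by
  have hr := h.six_le
  obtain ⟨x, hx0, hx1⟩ := h.exists_mem_edge_succ (j := 0) (by omega)
  suffices hwalk : ∀ j < r, walk f (f 0 x) j ∈ edge f a j ∧
      (j + 1 < r → walk f (f 0 x) j ∉ edge f a (j + 1)) from ⟨f 0 x, fun j hj => (hwalk j hj).1⟩
  intro j
  induction j with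
  | zero =>
    exact fun h0 => ⟨h.apply_mem_edge h0 hx0, fun h1 =>
      h.apply_notMem_edge_of_mem h1 h0 one_ne_zero hx1 hx0⟩
  | succ j ih =>
    intro hj
    obtain ⟨hmem, hnotMem⟩ := ih (by omega)
    have hmem' : walk f (f 0 x) (j + 1) ∈ edge f a j := h.apply_mem_edge (by omega) hmem
    refine ⟨?_, fun hj' => Set.disjoint_left.mp (h.disjoint_edge (by omega) hj' (by omega)) hmem'⟩
    obtain ⟨y, hyj, hyj'⟩ := h.exists_mem_edge_succ hj
    rcases h.eq_or_eq_of_mem_edge (by omega) hmem hyj with rfl | rfl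
    · exact absurd hyj' (hnotMem hj)
    · exact hyj'

theorem walk_surjective (h : Frame r f a) {x : α} (hx : ∀ j < r, walk f x j ∈ edge f a j) :
    Function.Surjective fun i : Fin (r + 1) => walk f x i := by
  refine Set.range_eq_univ.mp (h.connected _ (Set.range_nonempty _) fun j hj => ?_)
  have hedge : edge f a j ⊆ Set.range fun i : Fin (r + 1) => walk f x i := by
    rw [h.edge_eq_pair hj (hx j hj), Set.insert_subset_iff, Set.singleton_subset_iff]
    exact ⟨⟨⟨j, by omega⟩, rfl⟩, ⟨⟨j + 1, by omega⟩, rfl⟩⟩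
  exact iff_of_true (hedge (Or.inl rfl)) (hedge (Or.inr rfl))

theorem exists_equiv_eq_swap [Finite α] [DecidableEq α] (h : Frame r f a)
    (hα : Nat.card α = r + 1) :
    ∃ c : Fin (r + 1) ≃ α, ∀ j : Fin r, f j = Equiv.swap (c j.castSucc) (c j.succ) := by
  obtain ⟨x, hx⟩ := h.exists_walk_mem_edge
  have hbij := (h.walk_surjective hx).bijective_of_nat_card_le (by rw [hα, Nat.card_fin])
  refine ⟨Equiv.ofBijective _ hbij, fun j => ?_⟩
  rw [h.eq_edgeSwap j.2, h.edgeSwap_eq_swap j.2 (hx j j.2)]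
  rfl

end Frame

end Walk

theorem IsString.exists_equiv_eq_swap {α : Type*} [Finite α] [DecidableEq α] {r : ℕ}
    {f : ℕ → Perm α} (h : IsString (Finset.range r) f) (hr : 6 ≤ r) (hα : Nat.card α = r + 1) :
    ∃ c : Fin (r + 1) ≃ α, ∀ j : Fin r, f j = Equiv.swap (c j.castSucc) (c j.succ) := by
  obtain ⟨a, ha⟩ := h.exists_hasSeparatedEdges hr hα
  exact (ha.frame h hr hα).exists_equiv_eq_swap hα

theorem IsString.closure_eq_top {α : Type*} [Finite α] {r : ℕ} {f : ℕ → Perm α}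
    (h : IsString (Finset.range r) f) (hr : 6 ≤ r) (hα : Nat.card α = r + 1) :
    Subgroup.closure (f '' ↑(Finset.range r)) = ⊤ := by
  classical
  obtain ⟨c, hc⟩ := h.exists_equiv_eq_swap hr hα
  have := h.isPretransitive hα
  refine closure_of_isSwap_of_isPretransitive ?_
  rintro _ ⟨j, hj, rfl⟩
  have hj : j < r := Finset.mem_range.mp hj
  exact ⟨_, _, c.injective.ne Fin.castSucc_lt_succ.ne, hc ⟨j, hj⟩⟩

theorem IsSggi.exists_isString {n r : ℕ} {ρ : Fin r → Perm (Fin n)} (hsggi : IsSggi ρ)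
    (hind : IsIndependent ρ) :
    ∃ f : ℕ → Perm (Fin n), IsString (Finset.range r) f ∧ ∀ i : Fin r, f i = ρ i := by
  obtain ⟨f, hf⟩ : ∃ f : ℕ → Perm (Fin n), ∀ i : Fin r, f i = ρ i :=
    ⟨fun i => if h : i < r then ρ ⟨i, h⟩ else 1, fun i => by simp⟩
  have hlabel : ∀ i ∈ Finset.range r, ∃ k : Fin r, (k : ℕ) = i := fun i hi =>
    ⟨⟨i, Finset.mem_range.mp hi⟩, rfl⟩
  have hsq : ∀ k, ρ k * ρ k = 1 := fun k => by rw [← pow_two, ← hsggi.1 k, pow_orderOf_eq_one]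
  refine ⟨f, ⟨fun i hi => ?_, fun i hi j hj hij => ?_, fun i hi hmem => ?_⟩, hf⟩ <;>
    obtain ⟨k, rfl⟩ := hlabel i hi
  · rw [hf, hsq]
  · obtain ⟨l, rfl⟩ := hlabel j hj
    have hkl := hsggi.2 k l (by rw [lt_abs]; omega)
    rw [pow_two, mul_eq_one_iff_eq_inv, mul_inv_rev, inv_eq_of_mul_eq_one_left (hsq k),
      inv_eq_of_mul_eq_one_left (hsq l)] at hkl
    rwa [hf, hf]
  · refine hind k (hf k ▸ Subgroup.closure_mono ?_ hmem)
    rintro _ ⟨j, hj, rfl⟩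
    obtain ⟨hjk, hj⟩ := Finset.mem_erase.mp hj
    obtain ⟨l, rfl⟩ := hlabel j hj
    exact ⟨l, fun he => hjk (congrArg Fin.val he), (hf l).symm⟩

theorem stmt2 {n : ℕ} (hn : 7 ≤ n) (ρ : Fin (n - 1) → Equiv.Perm (Fin n))
    (hsggi : IsSggi ρ) (hind : IsIndependent ρ) :
    Subgroup.closure (Set.range ρ) = ⊤ ∧
      ∃ c : Fin n ≃ Fin n, ∀ i : Fin (n - 1),
        ρ i = Equiv.swap (c ⟨(i : ℕ), by have := i.isLt; omega⟩)
                         (c ⟨(i : ℕ) + 1, by have := i.isLt; omega⟩) := by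
  obtain ⟨r, rfl⟩ : ∃ r, n = r + 1 := ⟨n - 1, by omega⟩
  have hr : 6 ≤ r := by omega
  obtain ⟨f, hf, hfρ⟩ : ∃ f, IsString (Finset.range r) f ∧ ∀ i : Fin r, f i = ρ i :=
    hsggi.exists_isString hind
  obtain ⟨c, hc⟩ := hf.exists_equiv_eq_swap hr (Nat.card_fin _)
  refine ⟨?_, c, fun i => (hfρ i).symm.trans (hc i)⟩
  rw [eq_top_iff, ← hf.closure_eq_top hr (Nat.card_fin _)]
  refine Subgroup.closure_mono ?_
  rintro _ ⟨j, hj, rfl⟩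
  exact ⟨⟨j, Finset.mem_range.mp hj⟩, (hfρ ⟨j, _⟩).symm⟩
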